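/- Consider the Curie–Weiss model with dichotomous external field, i.e. ν = (1/2)(δ_h + δ_{−h}) with h ≥ 1/2. Then 0 is the unique global minimum of G(x) = (β/2)x² − (1/2) ln[cosh(β(x+h)) cosh(β(x−h))], it is of type 1 with strength λ₁ = β − β²(1 − tanh(βh)²), and for μ-almost every realization h and every α with 1/2 < α < 1, the sequence of laws of S_n/n^α under P_{n,β}^h satisfies a moderate deviations principle with speed n^{2α−1} and rate function I(x) = x²/(2σ₁²), where σ₁² = (1 − tanh(βh)²)/(1 − β(1 − tanh(βh)²)). -/

import Mathlib

open MeasureTheory ProbabilityTheory Real Filter Topology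
open scoped ENNReal NNReal

noncomputable section

/-- The value of a spin encoded as a Boolean. -/
def spin (b : Bool) : ℝ := if b then 1 else -1

/-- Total magnetization of a configuration. -/
def mag {n : ℕ} (σ : Fin n → Bool) : ℝ := ∑ i, spin (σ i)

/-- Gibbs weight of a configuration in the random field Curie-Weiss model. -/
def gibbsWeight (β : ℝ) (h : ℕ → ℝ) (n : ℕ) (σ : Fin n → Bool) : ℝ :=
  Real.exp (β / (2 * n) * (mag σ) ^ 2 + β * ∑ i : Fin n, h i * spin (σ i))

/-- The random field Curie-Weiss Gibbs measure on configurations. -/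
def gibbsMeasure (β : ℝ) (h : ℕ → ℝ) (n : ℕ) : Measure (Fin n → Bool) :=
  (ENNReal.ofReal (∑ σ : Fin n → Bool, gibbsWeight β h n σ))⁻¹ •
    ∑ σ : Fin n → Bool, ENNReal.ofReal (gibbsWeight β h n σ) • Measure.dirac σ

/-- `μ` is the infinite product of `ν` over `ℕ` (characterised by finite marginals). -/
def IsProductMeasure (ν : Measure ℝ) (μ : Measure (ℕ → ℝ)) : Prop :=
  ∀ n : ℕ, μ.map (fun h (i : Fin n) => h (i : ℕ)) = Measure.pi fun _ : Fin n => ν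

/-- extended logarithm, `elog 0 = ⊥`, `elog ⊤ = ⊤`. -/
def elog (x : ℝ≥0∞) : EReal :=
  if x = 0 then ⊥ else if x = ⊤ then ⊤ else ((Real.log x.toReal : ℝ) : EReal)

/-- A sequence of measures satisfies a large deviations principle with given speed and
rate function. -/
def HasLDP (P : ℕ → Measure ℝ) (speed : ℕ → ℝ) (I : ℝ → ℝ≥0∞) : Prop :=
  LowerSemicontinuous I ∧ (∀ c : ℝ, IsCompact {x : ℝ | I x ≤ ENNReal.ofReal c}) ∧
    ∀ C : Set ℝ, MeasurableSet C →
      -(⨅ x ∈ interior C, (I x : EReal)) ≤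
          liminf (fun n => ((((speed n)⁻¹ : ℝ) : EReal)) * elog (P n C)) atTop ∧
        limsup (fun n => ((((speed n)⁻¹ : ℝ) : EReal)) * elog (P n C)) atTop ≤
          -(⨅ x ∈ closure C, (I x : EReal))

/-- The function `G` of the random field Curie-Weiss model. -/
def G (β : ℝ) (ν : Measure ℝ) (x : ℝ) : ℝ :=
  β / 2 * x ^ 2 - ∫ h, Real.log (Real.cosh (β * (x + h))) ∂ν

/-- The finite-volume function `G_n^h`. -/
def Gn (β : ℝ) (h : ℕ → ℝ) (n : ℕ) (x : ℝ) : ℝ :=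
  β / 2 * x ^ 2 - (1 / n) * ∑ i : Fin n, Real.log (Real.cosh (β * (x + h i)))

/-- `m` is a (local or global) minimum of `G` of type `k` and strength `l`. -/
def IsMinOfType (β : ℝ) (ν : Measure ℝ) (m : ℝ) (k : ℕ) (l : ℝ) : Prop :=
  1 ≤ k ∧ 0 < l ∧ (∀ i : ℕ, 1 ≤ i → i ≤ 2 * k - 1 → iteratedDeriv i (G β ν) m = 0) ∧
    iteratedDeriv (2 * k) (G β ν) m = l

/-- The height of a minimum `m` of `G`. -/
def height (β : ℝ) (ν : Measure ℝ) (m : ℝ) : ℝ := G β ν m - ⨅ w, G β ν w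

/-- The broadness of a minimum `m` of `G`. -/
def broadness (β : ℝ) (ν : Measure ℝ) (m : ℝ) : ℝ :=
  sInf ((fun y => |y - m|) '' {y | G β ν y < G β ν m})

/-- The moderate deviations rate function. -/
def mdpRate (β l : ℝ) (k : ℕ) (x : ℝ) : ℝ≥0∞ :=
  if k = 1 then ENNReal.ofReal (x ^ 2 / (2 * (l⁻¹ - β⁻¹)))
  else ENNReal.ofReal (l * x ^ (2 * k) / (Nat.factorial (2 * k)))

/-- The polynomial `P_{2k}`. -/
def P2k (l : ℝ) (k : ℕ) (s : ℝ) : ℝ :=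
  l / (2 * (Nat.factorial (2 * k))) * s ^ (2 * k) - ∑ i ∈ Finset.Icc 1 (2 * k - 1), |s| ^ i

/-!
By the Hubbard–Stratonovich transformation, convolving the law of the rescaled magnetization with a
Gaussian gives a density proportional to `exp (-n (Gn (b z / n) - Gn 0))`, where `b = n ^ α`. Hence
the cumulant generating function of the magnetization is a Laplace integral minus a Gaussian term.
Around its nondegenerate minimum `0`, `G` is quadratic on the moderate scale `b / n → 0`, so
Laplace's method produces a quadratic limiting cumulant generating function, and the Gärtner–Ellis
argument turns it into the moderate deviations principle.

The field enters only through `Gn - G`. As every function on the two-point set `{c, -c}` is affine,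
this difference is proportional to the empirical mean of the field and at most linear in `x`;
it is negligible on the moderate scale because the sum of the field is almost surely `o(n ^ α)` for
every `α > 1 / 2`, by the sub-Gaussian tail bound and the Borel–Cantelli lemma.

That `0` is the global minimum of `G` amounts to
`1 + sinh (β x) ^ 2 / cosh (β c) ^ 2 < exp (β x ^ 2)`, whose left side decreases in `c`, so that
only `c = 1 / 2` has to be treated.
-/

section HyperbolicInequalities

lemma cosh_sub_one_eq (x : ℝ) : cosh x - 1 = 2 * sinh (x / 2) ^ 2 := by
  have h := cosh_two_mul (x / 2)
  rw [mul_div_cancel₀ x two_ne_zero, cosh_sq] at h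
  linarith

lemma one_add_cosh_eq (x : ℝ) : 1 + cosh x = 2 * cosh (x / 2) ^ 2 := by
  linarith [cosh_sub_one_eq x, cosh_sq (x / 2)]

lemma cosh_add_mul_cosh_sub (x y : ℝ) :
    cosh (x + y) * cosh (x - y) = cosh y ^ 2 + sinh x ^ 2 := by
  rw [cosh_add, cosh_sub]
  linear_combination cosh y ^ 2 * cosh_sq x + sinh x ^ 2 * cosh_sq y

lemma one_add_sq_div_two_le_cosh (x : ℝ) : 1 + x ^ 2 / 2 ≤ cosh x := by
  have h : |x / 2| ≤ |sinh (x / 2)| := by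
    rw [abs_sinh]
    exact self_le_sinh_iff.2 (abs_nonneg _)
  linarith [cosh_sub_one_eq x, sq_le_sq.2 h]

lemma two_mul_lt_one_add_cosh (x : ℝ) : 2 * x < 1 + cosh x := by
  rcases eq_or_ne x 2 with rfl | hx
  · have h := one_add_sq_div_two_le_cosh 1
    have h₂ := cosh_sub_one_eq 2
    have h₃ := cosh_sq 1
    norm_num at h h₂
    nlinarith
  · have : 0 < (x - 2) ^ 2 := by positivity [sub_ne_zero.2 hx]
    linarith [one_add_sq_div_two_le_cosh x]

lemma cosh_mul_sub_le (u : ℝ) {r : ℝ} (hr₀ : 0 ≤ r) (hr₁ : r ≤ 1) :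
    cosh (r * u) - 1 - (r * u) ^ 2 / 2 ≤ r ^ 4 * (cosh u - 1 - u ^ 2 / 2) := by
  have tail (v : ℝ) : HasSum (fun n => v ^ (2 * (n + 2)) / ((2 * (n + 2)).factorial : ℝ))
      (cosh v - 1 - v ^ 2 / 2) := by
    simpa [Finset.sum_range_succ, sub_sub] using (hasSum_nat_add_iff' 2).2 (hasSum_cosh v)
  refine hasSum_le (fun n => ?_) (tail (r * u)) ((tail u).mul_left (r ^ 4))
  have hr : r ^ (2 * (n + 2)) ≤ r ^ 4 := pow_le_pow_of_le_one hr₀ hr₁ (by lia)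
  rw [mul_pow, mul_div_assoc]
  gcongr
  rw [pow_mul]
  positivity

lemma mul_sinh_le_mul_cosh {a : ℝ} (ha : 0 ≤ a) :
    (6 + 3 * a ^ 2) * sinh a ≤ (6 * a + a ^ 3) * cosh a := by
  set f : ℝ → ℝ := fun a => (6 * a + a ^ 3) * cosh a - (6 + 3 * a ^ 2) * sinh a
  have hf (x : ℝ) : HasDerivAt f (x ^ 3 * sinh x) x := by
    refine (((((hasDerivAt_id x).const_mul 6).add (hasDerivAt_pow 3 x)).mul
      (hasDerivAt_cosh x)).sub ((((hasDerivAt_pow 2 x).const_mul 3).const_add 6).mul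
      (hasDerivAt_sinh x))).congr_deriv ?_
    simp only [Pi.add_apply, id]
    push_cast
    ring
  have hmono : MonotoneOn f (Set.Ici 0) := by
    refine monotoneOn_of_deriv_nonneg (convex_Ici 0)
      (fun x _ => (hf x).continuousAt.continuousWithinAt)
      (fun x _ => (hf x).differentiableAt.differentiableWithinAt) fun x hx => ?_
    rw [interior_Ici] at hx
    rw [(hf x).deriv]
    exact mul_nonneg (pow_nonneg hx.le 3) (sinh_nonneg_iff.2 hx.le)
  have h := hmono Set.self_mem_Ici ha ha
  simp only [f, sinh_zero] at h
  linarith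

lemma sinh_sq_lt_mul_cosh_sq {a : ℝ} (ha : 0 < a) :
    sinh a ^ 2 < (a / 2 + a ^ 2 / 8) * cosh a ^ 2 := by
  have hpoly : 8 * a * (6 + a ^ 2) ^ 2 < 9 * (4 + a) * (2 + a ^ 2) ^ 2 := by
    nlinarith [sq_nonneg (6 * a ^ 2 - 5 * a), sq_nonneg (a - 252 / 238), pow_pos ha 5]
  have hsq : ((6 + 3 * a ^ 2) * sinh a) ^ 2 ≤ ((6 * a + a ^ 3) * cosh a) ^ 2 :=
    pow_le_pow_left₀ (by have := sinh_nonneg_iff.2 ha.le; positivity) (mul_sinh_le_mul_cosh ha.le) 2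
  have hcoef : (6 * a + a ^ 3) ^ 2 < (6 + 3 * a ^ 2) ^ 2 * (a / 2 + a ^ 2 / 8) := by
    nlinarith [mul_pos ha (sub_pos.2 hpoly)]
  refine lt_of_mul_lt_mul_left ?_ (sq_nonneg (6 + 3 * a ^ 2))
  calc (6 + 3 * a ^ 2) ^ 2 * sinh a ^ 2 ≤ (6 * a + a ^ 3) ^ 2 * cosh a ^ 2 := by
        simpa only [mul_pow] using hsq
    _ < (6 + 3 * a ^ 2) ^ 2 * (a / 2 + a ^ 2 / 8) * cosh a ^ 2 := by
        have := cosh_pos a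
        gcongr
    _ = _ := by ring

variable {β x : ℝ}

lemma cosh_two_mul_lt_of_le_half (hβ : 0 < β) (hx₀ : 0 < x) (hx : x ≤ 1 / 2) :
    cosh (2 * β * x) + cosh β < exp (β * x ^ 2) * (1 + cosh β) := by
  have hexp : 1 + β * x ^ 2 + (β * x ^ 2) ^ 2 / 2 ≤ exp (β * x ^ 2) :=
    quadratic_le_exp_of_nonneg (by positivity)
  have hcosh := cosh_mul_sub_le β (r := 2 * x) (by linarith) (by linarith)
  rw [show 2 * x * β = 2 * β * x by ring] at hcosh
  have hzero := mul_pos hβ (sub_pos.2 (two_mul_lt_one_add_cosh β))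
  have hquarter : 4 * (cosh β - 1) < β * (1 + β / 8) * (1 + cosh β) := by
    have := sinh_sq_lt_mul_cosh_sq (half_pos hβ)
    rw [cosh_sub_one_eq, one_add_cosh_eq]
    linarith
  have hx4 : x ^ 2 ≤ 1 / 4 := by nlinarith
  have hc := one_le_cosh β
  -- Divided by `x ^ 2` the bound is affine in `x ^ 2`, so it suffices to check `0` and `1/4`.
  have haffine : 0 < (1 - 4 * x ^ 2) * (β * (1 + cosh β - 2 * β)) +
      4 * x ^ 2 * (β * (1 + β / 8) * (1 + cosh β) - 4 * (cosh β - 1)) := by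
    have h1 : 0 ≤ (1 - 4 * x ^ 2) := by linarith
    have h2 : 0 < 4 * x ^ 2 := by positivity
    exact add_pos_of_nonneg_of_pos (mul_nonneg h1 hzero.le) (mul_pos h2 (sub_pos.2 hquarter))
  nlinarith [mul_pos (pow_pos hx₀ 2) haffine,
    mul_le_mul_of_nonneg_right hexp (by linarith : 0 ≤ 1 + cosh β)]

/-- Reflection at `1/2`: `exp (-β x²) (cosh (2 β x) + cosh β)` is a combination of Gaussians centred
at `0`, `1` and `-1`; its part symmetric under `x ↦ 1 - x` drops out of the comparison and the rest
is larger at `1 - x` than at `x`. -/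
lemma cosh_two_mul_lt_of_half_le (hβ : 0 < β) (hx : 1 / 2 < x) (hx₁ : x < 1) :
    cosh (2 * β * x) + cosh β < exp (β * x ^ 2) * (1 + cosh β) := by
  have gaussians (y : ℝ) : 2 * exp (-(β * y ^ 2)) * (cosh (2 * β * y) + cosh β) =
      exp β * (exp (-(β * y ^ 2)) + exp (-(β * (1 - y) ^ 2))) + exp (-β) * exp (-(β * y ^ 2)) +
        exp β * exp (-(β * (1 + y) ^ 2)) := by
    rw [cosh_eq, cosh_eq]
    have h1 : exp β * exp (-(β * (1 - y) ^ 2)) = exp (-(β * y ^ 2)) * exp (2 * β * y) := by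
      rw [← exp_add, ← exp_add]; ring_nf
    have h2 : exp β * exp (-(β * (1 + y) ^ 2)) = exp (-(β * y ^ 2)) * exp (-(2 * β * y)) := by
      rw [← exp_add, ← exp_add]; ring_nf
    linear_combination -h1 - h2
  have hrefl : exp (-(β * x ^ 2)) * (cosh (2 * β * x) + cosh β) <
      exp (-(β * (1 - x) ^ 2)) * (cosh (2 * β * (1 - x)) + cosh β) := by
    have h1 : exp (-(β * x ^ 2)) < exp (-(β * (1 - x) ^ 2)) := by
      gcongr 1; nlinarith
    have h2 : exp (-(β * (1 + x) ^ 2)) < exp (-(β * (1 + (1 - x)) ^ 2)) := by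
      gcongr 1; nlinarith
    have h3 := gaussians (1 - x)
    rw [sub_sub_cancel] at h3
    nlinarith [gaussians x, mul_pos (exp_pos (-β)) (sub_pos.2 h1),
      mul_pos (exp_pos β) (sub_pos.2 h2)]
  have hle := cosh_two_mul_lt_of_le_half hβ (sub_pos.2 hx₁) (by linarith)
  rw [exp_neg, exp_neg, inv_mul_lt_iff₀ (exp_pos _), ← div_eq_inv_mul] at hrefl
  refine hrefl.trans (mul_lt_mul_of_pos_left ?_ (exp_pos _))
  rwa [div_lt_iff₀' (exp_pos _)]

lemma cosh_two_mul_lt_of_one_le (hβ : 0 < β) (hx : 1 ≤ x) :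
    cosh (2 * β * x) + cosh β < exp (β * x ^ 2) * (1 + cosh β) := by
  have h1 : exp (2 * β * x) ≤ exp (β * x ^ 2) * exp β := by
    rw [← exp_add]
    gcongr
    nlinarith [mul_nonneg hβ.le (sq_nonneg (x - 1))]
  have h2 : exp β ≤ exp (β * x ^ 2) := by
    gcongr
    exact le_mul_of_one_le_right hβ.le (one_le_pow₀ hx)
  have h3 : exp (-(2 * β * x)) < 1 := exp_lt_one_iff.2 (by nlinarith)
  have h4 : 1 < exp β := one_lt_exp_iff.2 hβ
  have h5 := exp_pos (-β)
  rw [cosh_eq, cosh_eq]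
  nlinarith

lemma cosh_two_mul_add_cosh_lt (hβ : 0 < β) (hx : x ≠ 0) :
    cosh (2 * β * x) + cosh β < exp (β * x ^ 2) * (1 + cosh β) := by
  wlog hpos : 0 < x generalizing x
  · simpa using this (neg_ne_zero.2 hx) (by simpa using hx.lt_of_le (not_lt.1 hpos))
  rcases le_or_gt x (1 / 2) with hx₁ | hx₁
  · exact cosh_two_mul_lt_of_le_half hβ hpos hx₁
  rcases lt_or_ge x 1 with hx₂ | hx₂
  · exact cosh_two_mul_lt_of_half_le hβ hx₁ hx₂
  · exact cosh_two_mul_lt_of_one_le hβ hx₂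

lemma one_add_sinh_sq_div_cosh_sq_lt_exp {c : ℝ} (hβ : 0 < β) (hc : 1 / 2 ≤ c) (hx : x ≠ 0) :
    1 + sinh (β * x) ^ 2 / cosh (β * c) ^ 2 < exp (β * x ^ 2) := by
  have hcosh : cosh (β / 2) ≤ cosh (β * c) := by
    rw [cosh_le_cosh, abs_of_pos (by positivity), abs_of_pos (by positivity)]
    nlinarith
  have := cosh_pos (β / 2)
  have key : sinh (β * x) ^ 2 < (exp (β * x ^ 2) - 1) * cosh (β / 2) ^ 2 := by
    have h := cosh_two_mul_add_cosh_lt hβ hx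
    have h₁ := cosh_sub_one_eq (2 * β * x)
    rw [show 2 * β * x / 2 = β * x by ring] at h₁
    have h₂ := one_add_cosh_eq β
    rw [h₂] at h
    linarith
  have : sinh (β * x) ^ 2 / cosh (β * c) ^ 2 < exp (β * x ^ 2) - 1 :=
    calc sinh (β * x) ^ 2 / cosh (β * c) ^ 2 ≤ sinh (β * x) ^ 2 / cosh (β / 2) ^ 2 := by gcongr
      _ < exp (β * x ^ 2) - 1 := (div_lt_iff₀ (by positivity)).2 key
  linarith

lemma lt_cosh_mul_sq {c : ℝ} (hβ : 0 < β) (hc : 1 / 2 ≤ c) : β < cosh (β * c) ^ 2 := by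
  have hcosh : cosh β ≤ cosh (2 * (β * c)) := by
    rw [cosh_le_cosh, abs_of_pos hβ, abs_of_pos (by positivity)]
    nlinarith
  have h := one_add_cosh_eq (2 * (β * c))
  rw [mul_div_cancel_left₀ _ two_ne_zero] at h
  linarith [two_mul_lt_one_add_cosh β]

lemma one_sub_tanh_sq (x : ℝ) : 1 - tanh x ^ 2 = (cosh x ^ 2)⁻¹ := by
  have := cosh_pos x
  rw [tanh_eq_sinh_div_cosh, div_pow, sinh_sq]
  field_simp
  ring

end HyperbolicInequalities

section SecondOrderMinimum

lemma IsMinOfType.isLittleO_sub_sq {β : ℝ} {ν : Measure ℝ} {m l : ℝ} (hm : IsMinOfType β ν m 1 l)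
    (hG : ContDiff ℝ 2 (G β ν)) :
    (fun x => G β ν x - G β ν m - l / 2 * (x - m) ^ 2) =o[𝓝 m] fun x => (x - m) ^ 2 := by
  obtain ⟨-, -, h₁, h₂⟩ := hm
  have hderiv : deriv (G β ν) m = 0 := by simpa using h₁ 1 le_rfl le_rfl
  have hiter : iteratedDeriv 2 (G β ν) m = l := h₂
  refine (taylor_isLittleO_univ hG).congr_left fun x => ?_
  simp only [taylorWithinEval_succ, taylor_within_zero_eval, iteratedDerivWithin_univ, hiter,
    zero_add, iteratedDeriv_one, hderiv, smul_eq_mul, mul_zero, add_zero]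
  norm_num [Nat.factorial]
  ring

lemma exists_mul_sq_le_of_pos {f : ℝ → ℝ} (hf : Continuous f) (hpos : ∀ x ≠ 0, 0 < f x) {a : ℝ}
    (ha : 0 < a) (hzero : ∀ᶠ x in 𝓝 0, a * x ^ 2 ≤ f x)
    (hinfty : ∀ᶠ x in cocompact ℝ, a * x ^ 2 ≤ f x) : ∃ δ > 0, ∀ x, δ * x ^ 2 ≤ f x := by
  obtain ⟨K, hK, hKf⟩ := mem_cocompact.1 hinfty
  obtain ⟨U, hUf, hU, h0U⟩ := mem_nhds_iff.1 hzero
  have hne : ∀ x ∈ K \ U, x ≠ 0 := by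
    rintro x hx rfl
    exact hx.2 h0U
  obtain ⟨b, hb, hbf⟩ := (hK.diff hU).exists_forall_le' (f := fun x => f x / x ^ 2) (a := 0)
    (hf.continuousOn.div (by fun_prop) fun x hx => pow_ne_zero 2 (hne x hx))
    fun x hx => div_pos (hpos x (hne x hx)) (by positivity [hne x hx])
  refine ⟨min a b, lt_min ha hb, fun x => ?_⟩
  by_cases hx : x ∈ K \ U
  · have : 0 < x ^ 2 := by positivity [hne x hx]
    calc min a b * x ^ 2 ≤ b * x ^ 2 := by gcongr; exact min_le_right a b
      _ ≤ f x := (le_div_iff₀ this).1 (hbf x hx)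
  · have hax : a * x ^ 2 ≤ f x := by
      by_cases hxU : x ∈ U
      · exact hUf hxU
      · exact hKf fun hxK => hx ⟨hxK, hxU⟩
    exact le_trans (by gcongr; exact min_le_left a b) hax

end SecondOrderMinimum

section DichotomousLaw

/-- The law of a field taking each of the values `c` and `-c` with probability one half. -/
def dichotomousLaw (c : ℝ) : Measure ℝ :=
  (1 / 2 : ℝ≥0∞) • Measure.dirac c + (1 / 2 : ℝ≥0∞) • Measure.dirac (-c)

variable {β c x : ℝ}

instance : IsProbabilityMeasure (dichotomousLaw c) where
  measure_univ := by simp [dichotomousLaw, ENNReal.inv_two_add_inv_two]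

lemma integral_dichotomousLaw (f : ℝ → ℝ) : ∫ h, f h ∂dichotomousLaw c = (f c + f (-c)) / 2 := by
  have hint (a : ℝ) : Integrable f ((1 / 2 : ℝ≥0∞) • Measure.dirac a) :=
    (integrable_dirac (by simp)).smul_measure (by simp)
  rw [dichotomousLaw, integral_add_measure (hint _) (hint _), integral_smul_measure,
    integral_smul_measure, integral_dirac, integral_dirac]
  simp only [one_div, ENNReal.toReal_inv, ENNReal.toReal_ofNat, smul_eq_mul]
  ring

lemma ae_dichotomousLaw : ∀ᵐ h ∂dichotomousLaw c, h = c ∨ h = -c := by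
  simp [dichotomousLaw, ae_add_measure_iff, ae_dirac_eq]

lemma G_dichotomousLaw :
    G β (dichotomousLaw c) =
      fun x => β / 2 * x ^ 2 - (log (cosh (β * (x + c))) + log (cosh (β * (x - c)))) / 2 := by
  funext x
  rw [G, integral_dichotomousLaw, sub_eq_add_neg x c]

lemma contDiff_G_dichotomousLaw {n : WithTop ℕ∞} : ContDiff ℝ n (G β (dichotomousLaw c)) := by
  have hlog {f : ℝ → ℝ} (hf : ContDiff ℝ n f) : ContDiff ℝ n fun x => log (cosh (f x)) :=
    hf.cosh.log fun x => (cosh_pos _).ne'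
  rw [G_dichotomousLaw]
  exact ContDiff.sub (by fun_prop)
    ((ContDiff.add (hlog (by fun_prop)) (hlog (by fun_prop))).div_const 2)

lemma G_dichotomousLaw_sub_G_zero :
    G β (dichotomousLaw c) x - G β (dichotomousLaw c) 0 =
      (β * x ^ 2 - log (1 + sinh (β * x) ^ 2 / cosh (β * c) ^ 2)) / 2 := by
  have := cosh_pos (β * c)
  have hprod : 1 + sinh (β * x) ^ 2 / cosh (β * c) ^ 2 =
      cosh (β * (x + c)) * cosh (β * (x - c)) / cosh (β * c) ^ 2 := by
    rw [mul_add, mul_sub, cosh_add_mul_cosh_sub]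
    field_simp
  rw [hprod, log_div (mul_pos (cosh_pos _) (cosh_pos _)).ne' (by positivity),
    log_mul (cosh_pos _).ne' (cosh_pos _).ne', log_pow, G_dichotomousLaw]
  simp only [zero_add, zero_sub, mul_neg, cosh_neg]
  push_cast
  ring

lemma G_dichotomousLaw_zero_lt (hβ : 0 < β) (hc : 1 / 2 ≤ c) (hx : x ≠ 0) :
    G β (dichotomousLaw c) 0 < G β (dichotomousLaw c) x := by
  have h := (log_lt_iff_lt_exp (by positivity)).2 (one_add_sinh_sq_div_cosh_sq_lt_exp hβ hc hx)
  rw [← sub_pos, G_dichotomousLaw_sub_G_zero]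
  linarith

lemma mul_sq_le_G_dichotomousLaw_sub (hβ : 0 < β) (hx : 4 ≤ |x|) :
    β / 4 * x ^ 2 ≤ G β (dichotomousLaw c) x - G β (dichotomousLaw c) 0 := by
  have hbound : 1 + sinh (β * x) ^ 2 / cosh (β * c) ^ 2 ≤ exp (2 * (β * |x|)) :=
    calc 1 + sinh (β * x) ^ 2 / cosh (β * c) ^ 2 ≤ 1 + sinh (β * x) ^ 2 := by
          gcongr
          exact div_le_self (sq_nonneg _) (one_le_pow₀ (one_le_cosh _))
      _ = cosh (β * |x|) ^ 2 := by
          rw [← cosh_sq', ← cosh_abs, abs_mul, abs_of_pos hβ]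
      _ ≤ exp (β * |x|) ^ 2 := by
          gcongr
          rw [← cosh_add_sinh]
          linarith [sinh_nonneg_iff.2 (by positivity : 0 ≤ β * |x|)]
      _ = exp (2 * (β * |x|)) := by rw [← exp_nat_mul]; norm_num
  have hlog := (log_le_iff_le_exp (by positivity)).2 hbound
  rw [G_dichotomousLaw_sub_G_zero]
  nlinarith [sq_abs x, mul_nonneg (mul_nonneg hβ.le (abs_nonneg x)) (sub_nonneg.2 hx)]

lemma hasDerivAt_log_cosh (x : ℝ) : HasDerivAt (fun x => log (cosh x)) (tanh x) x := by
  simpa only [tanh_eq_sinh_div_cosh] using (hasDerivAt_cosh x).log (cosh_pos x).ne'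

lemma hasDerivAt_tanh (x : ℝ) : HasDerivAt tanh (1 - tanh x ^ 2) x := by
  have hc := cosh_pos x
  rw [show tanh = fun x => sinh x / cosh x from funext tanh_eq_sinh_div_cosh]
  refine ((hasDerivAt_sinh x).fun_div (hasDerivAt_cosh x) hc.ne').congr_deriv ?_
  field_simp

lemma deriv_G_dichotomousLaw :
    deriv (G β (dichotomousLaw c)) =
      fun x => β * x - β * (tanh (β * (x + c)) + tanh (β * (x - c))) / 2 := by
  funext x
  have hterm (a : ℝ) :
      HasDerivAt (fun x => log (cosh (β * (x + a)))) (tanh (β * (x + a)) * β) x := by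
    simpa [Function.comp_def] using (hasDerivAt_log_cosh (β * (x + a))).comp x
      (((hasDerivAt_id x).add_const a).const_mul β)
  rw [G_dichotomousLaw]
  refine HasDerivAt.deriv ((((hasDerivAt_pow 2 x).const_mul (β / 2)).sub
    (((hterm c).add (hterm (-c))).div_const 2)).congr_deriv ?_)
  rw [sub_eq_add_neg x c]
  push_cast
  ring

lemma isMinOfType_G_dichotomousLaw (hβ : 0 < β) (hc : 1 / 2 ≤ c) :
    IsMinOfType β (dichotomousLaw c) 0 1 (β - β ^ 2 * (1 - tanh (β * c) ^ 2)) := by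
  have hderiv :
      HasDerivAt (deriv (G β (dichotomousLaw c))) (β - β ^ 2 * (1 - tanh (β * c) ^ 2)) 0 := by
    have hterm (a : ℝ) :
        HasDerivAt (fun x => tanh (β * (x + a))) ((1 - tanh (β * a) ^ 2) * β) 0 := by
      simpa [Function.comp_def] using (hasDerivAt_tanh (β * (0 + a))).comp (0 : ℝ)
        (((hasDerivAt_id (0 : ℝ)).add_const a).const_mul β)
    rw [deriv_G_dichotomousLaw]
    refine (((hasDerivAt_id (0 : ℝ)).const_mul β).sub
      ((((hterm c).add (hterm (-c))).const_mul β).div_const 2)).congr_deriv ?_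
    rw [mul_neg, tanh_neg]
    ring
  refine ⟨le_rfl, ?_, fun i hi₁ hi₂ => ?_, ?_⟩
  · have := cosh_pos (β * c)
    rw [one_sub_tanh_sq, sub_pos, ← div_eq_mul_inv, div_lt_iff₀ (by positivity), sq]
    exact mul_lt_mul_of_pos_left (lt_cosh_mul_sq hβ hc) hβ
  · obtain rfl : i = 1 := by lia
    simp [deriv_G_dichotomousLaw, tanh_neg]
  · rw [mul_one, iteratedDeriv_succ, iteratedDeriv_one, hderiv.deriv]

lemma exists_mul_sq_le_G_dichotomousLaw_sub (hβ : 0 < β) (hc : 1 / 2 ≤ c) :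
    ∃ δ > 0, ∀ x, δ * x ^ 2 ≤ G β (dichotomousLaw c) x - G β (dichotomousLaw c) 0 := by
  have hmin := isMinOfType_G_dichotomousLaw hβ hc
  set l := β - β ^ 2 * (1 - tanh (β * c) ^ 2)
  have hl : 0 < l := hmin.2.1
  have hnear : ∀ᶠ x in 𝓝 0,
      l / 4 * x ^ 2 ≤ G β (dichotomousLaw c) x - G β (dichotomousLaw c) 0 := by
    filter_upwards [(hmin.isLittleO_sub_sq contDiff_G_dichotomousLaw).def (c := l / 4)
      (by positivity)] with x hx
    rw [sub_zero, norm_of_nonneg (sq_nonneg x)] at hx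
    linarith [(abs_le.1 hx).1]
  have hfar : ∀ᶠ x in cocompact ℝ,
      β / 4 * x ^ 2 ≤ G β (dichotomousLaw c) x - G β (dichotomousLaw c) 0 := by
    filter_upwards [tendsto_norm_cocompact_atTop.eventually_ge_atTop 4] with x hx
    exact mul_sq_le_G_dichotomousLaw_sub hβ hx
  refine exists_mul_sq_le_of_pos (a := min (l / 4) (β / 4))
    (contDiff_G_dichotomousLaw (n := 0).continuous.sub continuous_const)
    (fun x hx => sub_pos.2 (G_dichotomousLaw_zero_lt hβ hc hx)) (by positivity) ?_ ?_
  · filter_upwards [hnear] with x hx using hx.trans' (by gcongr; exact min_le_left _ _)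
  · filter_upwards [hfar] with x hx using hx.trans' (by gcongr; exact min_le_right _ _)

end DichotomousLaw

section ExponentialScale

variable {a : ℕ → ℝ} {L r : ℝ} {M : ℕ → ℝ}

lemma eventually_const_le_exp_mul (ha : Tendsto a atTop atTop) (hr : 0 < r) (C : ℝ) :
    ∀ᶠ n in atTop, C ≤ exp (a n * r) :=
  (tendsto_exp_atTop.comp (ha.atTop_mul_const hr)).eventually_ge_atTop C

lemma eventually_le_exp_mul (ha : Tendsto a atTop atTop)
    (hM : Tendsto (fun n => (a n)⁻¹ * log (M n)) atTop (𝓝 L)) (hr : L < r) :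
    ∀ᶠ n in atTop, M n ≤ exp (a n * r) := by
  filter_upwards [ha.eventually_gt_atTop 0, hM.eventually_lt_const hr] with n hn h
  exact (le_exp_log _).trans (exp_le_exp.2 ((inv_mul_lt_iff₀ hn).1 h).le)

lemma eventually_exp_mul_le (ha : Tendsto a atTop atTop) (hpos : ∀ n, 0 < M n)
    (hM : Tendsto (fun n => (a n)⁻¹ * log (M n)) atTop (𝓝 L)) (hr : r < L) :
    ∀ᶠ n in atTop, exp (a n * r) ≤ M n := by
  filter_upwards [ha.eventually_gt_atTop 0, hM.eventually_const_lt hr] with n hn h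
  exact (le_log_iff_exp_le (hpos n)).1 ((lt_inv_mul_iff₀ hn).1 h).le

lemma tendsto_inv_mul_log (ha : Tendsto a atTop atTop)
    (hupper : ∀ r > L, ∀ᶠ n in atTop, M n ≤ exp (a n * r))
    (hlower : ∀ r < L, ∀ᶠ n in atTop, exp (a n * r) ≤ M n) :
    Tendsto (fun n => (a n)⁻¹ * log (M n)) atTop (𝓝 L) := by
  have hpos : ∀ᶠ n in atTop, 0 < M n :=
    (hlower (L - 1) (by linarith)).mono fun n hn => (exp_pos _).trans_le hn
  refine tendsto_order.2 ⟨fun r hr => ?_, fun r hr => ?_⟩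
  · obtain ⟨q, hrq, hqL⟩ := exists_between hr
    filter_upwards [ha.eventually_gt_atTop 0, hlower q hqL, hpos] with n hn h hMn
    exact hrq.trans_le ((le_inv_mul_iff₀ hn).2 ((le_log_iff_exp_le hMn).2 h))
  · obtain ⟨q, hLq, hqr⟩ := exists_between hr
    filter_upwards [ha.eventually_gt_atTop 0, hupper q hLq, hpos] with n hn h hMn
    exact ((inv_mul_le_iff₀ hn).2 ((log_le_iff_le_exp hMn).2 h)).trans_lt hqr

lemma inv_mul_elog_le {b : ℝ} {p : ℝ≥0∞} (hb : 0 < b) (hp : p ≠ ⊤) (h : p.toReal ≤ exp (b * r)) :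
    ((b⁻¹ : ℝ) : EReal) * elog p ≤ r := by
  rcases eq_or_ne p 0 with rfl | h0
  · simp [elog, EReal.coe_mul_bot_of_pos (inv_pos.2 hb)]
  · rw [elog, if_neg h0, if_neg hp, ← EReal.coe_mul, EReal.coe_le_coe_iff, inv_mul_le_iff₀ hb]
    exact (log_le_iff_le_exp (ENNReal.toReal_pos h0 hp)).2 h

lemma le_inv_mul_elog {b : ℝ} {p : ℝ≥0∞} (hb : 0 < b) (h : exp (b * r) ≤ p.toReal) :
    (r : EReal) ≤ ((b⁻¹ : ℝ) : EReal) * elog p := by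
  have hp : 0 < p.toReal := (exp_pos _).trans_le h
  obtain ⟨h0, hp'⟩ := ENNReal.toReal_pos_iff.1 hp
  rw [elog, if_neg h0.ne', if_neg hp'.ne, ← EReal.coe_mul, EReal.coe_le_coe_iff, le_inv_mul_iff₀ hb]
  exact (le_log_iff_exp_le hp).2 h

end ExponentialScale

section QuadraticRate

variable {s : ℝ}

lemma coe_ofReal_sq_div (hs : 0 < s) (x : ℝ) :
    ((ENNReal.ofReal (x ^ 2 / (2 * s)) : ℝ≥0∞) : EReal) = ((x ^ 2 / (2 * s) : ℝ) : EReal) := by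
  rw [EReal.coe_ennreal_ofReal, max_eq_left (by positivity)]

lemma continuous_ofReal_sq_div : Continuous fun x : ℝ => ENNReal.ofReal (x ^ 2 / (2 * s)) :=
  ENNReal.continuous_ofReal.comp (by fun_prop)

lemma isCompact_ofReal_sq_div_le (hs : 0 < s) (c : ℝ) :
    IsCompact {x : ℝ | ENNReal.ofReal (x ^ 2 / (2 * s)) ≤ ENNReal.ofReal c} := by
  refine (isCompact_closedBall (0 : ℝ) √(max c 0 * (2 * s))).of_isClosed_subset
    (isClosed_le continuous_ofReal_sq_div continuous_const) fun x hx => ?_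
  have h : x ^ 2 / (2 * s) ≤ max c 0 := by
    rcases ENNReal.ofReal_le_ofReal_iff'.1 hx with h | h
    · exact h.trans (le_max_left c 0)
    · exact h.trans (le_max_right c 0)
  rw [mem_closedBall_zero_iff, norm_eq_abs]
  exact abs_le_sqrt ((div_le_iff₀ (by positivity)).1 h)

end QuadraticRate

section GartnerEllis

lemma mgf_id_le_ball_add_tails {Q : Measure ℝ} [IsFiniteMeasure Q]
    (hQ : ∀ t, Integrable (fun y => exp (t * y)) Q) (t x ε : ℝ) {τ : ℝ} (hτ : 0 ≤ τ) :
    mgf id Q t ≤ Q.real (Metric.ball x ε) * exp (t * x + |t| * ε) +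
      exp (-(τ * (x + ε))) * mgf id Q (t + τ) + exp (τ * (x - ε)) * mgf id Q (t - τ) := by
  set B := Metric.ball x ε
  have hpointwise (y : ℝ) : exp (t * y) ≤ B.indicator (fun _ => exp (t * x + |t| * ε)) y +
      exp (-(τ * (x + ε))) * exp ((t + τ) * y) + exp (τ * (x - ε)) * exp ((t - τ) * y) := by
    rw [← exp_add, ← exp_add]
    by_cases hy : y ∈ B
    · have hball : t * (y - x) ≤ |t| * ε := by
        refine (le_abs_self _).trans ?_
        rw [abs_mul, ← dist_eq]
        gcongr
        exact (Metric.mem_ball.1 hy).le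
      rw [Set.indicator_of_mem hy, add_assoc]
      exact le_add_of_le_of_nonneg (exp_le_exp.2 (by linarith)) (by positivity)
    · rw [Set.indicator_of_notMem hy, zero_add]
      have hdist : ε ≤ |y - x| := by simpa [B, dist_eq] using hy
      rcases le_abs.1 hdist with h | h
      · refine le_add_of_le_of_nonneg (exp_le_exp.2 ?_) (exp_pos _).le
        linarith [mul_le_mul_of_nonneg_left h hτ]
      · refine le_add_of_nonneg_of_le (exp_pos _).le (exp_le_exp.2 ?_)
        linarith [mul_le_mul_of_nonneg_left h hτ]
  have hB : Integrable (B.indicator fun _ => exp (t * x + |t| * ε)) Q :=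
    (integrable_const _).indicator measurableSet_ball
  have hright := (hQ (t + τ)).const_mul (exp (-(τ * (x + ε))))
  have hleft := (hQ (t - τ)).const_mul (exp (τ * (x - ε)))
  refine (integral_mono (hQ t) ((hB.add hright).add hleft) hpointwise).trans_eq ?_
  rw [integral_add' (hB.add hright) hleft, integral_add' hB hright, integral_const_mul,
    integral_const_mul, integral_indicator_const _ measurableSet_ball, smul_eq_mul]
  rfl

variable {P : ℕ → Measure ℝ} [∀ n, IsProbabilityMeasure (P n)] {a : ℕ → ℝ} {s : ℝ}

lemma eventually_measureReal_le_abs_le (ha : Tendsto a atTop atTop) (hs : 0 < s)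
    (hint : ∀ n t, Integrable (fun y => exp (t * y)) (P n))
    (hcgf : ∀ t, Tendsto (fun n => (a n)⁻¹ * cgf id (P n) (a n * t)) atTop (𝓝 (s * t ^ 2 / 2)))
    {m r : ℝ} (hm : 0 ≤ m) (hr : -(m ^ 2 / (2 * s)) < r) :
    ∀ᶠ n in atTop, (P n).real {y | m ≤ |y|} ≤ exp (a n * r) := by
  obtain ⟨q, hq, hqr⟩ := exists_between hr
  have hexponent : s * (m / s) ^ 2 / 2 < m / s * m + q := by
    have : s * (m / s) ^ 2 / 2 = m / s * m - m ^ 2 / (2 * s) := by field_simp; ring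
    linarith
  filter_upwards [eventually_le_exp_mul ha (hcgf (m / s)) hexponent,
    eventually_le_exp_mul ha (hcgf (-(m / s))) (by rwa [neg_sq]), ha.eventually_gt_atTop 0,
    eventually_const_le_exp_mul ha (sub_pos.2 hqr) 2] with n hright hleft hn htwo
  have hts : 0 ≤ a n * (m / s) := by positivity
  have hge := measure_ge_le_exp_mul_mgf (X := id) m hts (hint n _)
  have hle := measure_le_le_exp_mul_mgf (X := id) (t := a n * -(m / s)) (-m) (by linarith)
    (hint n _)
  have hsub : {y : ℝ | m ≤ |y|} ⊆ {y | m ≤ id y} ∪ {y | id y ≤ -m} :=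
    fun y (hy : m ≤ |y|) => show m ≤ y ∨ y ≤ -m from (le_abs.1 hy).imp_right le_neg_of_le_neg
  calc (P n).real {y | m ≤ |y|} ≤ (P n).real {y | m ≤ id y} + (P n).real {y | id y ≤ -m} :=
        (measureReal_mono hsub).trans (measureReal_union_le _ _)
    _ ≤ exp (-(a n * (m / s)) * m) * exp (a n * (m / s * m + q)) +
          exp (-(a n * -(m / s)) * -m) * exp (a n * (m / s * m + q)) :=
        add_le_add (hge.trans (by gcongr)) (hle.trans (by gcongr))
    _ = 2 * exp (a n * q) := by rw [← exp_add, ← exp_add]; ring_nf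
    _ ≤ exp (a n * (r - q)) * exp (a n * q) := by gcongr
    _ = exp (a n * r) := by rw [← exp_add]; ring_nf

lemma half_exp_le_measureReal_ball_mul {Q : Measure ℝ} [IsFiniteMeasure Q]
    (hQ : ∀ t, Integrable (fun y => exp (t * y)) Q) {N s t τ γ : ℝ} (hN : 0 < N) (hτ : 0 ≤ τ)
    (hγ : 8 * γ = s * τ ^ 2)
    (hcentre : exp (N * (s * t ^ 2 / 2 - γ)) ≤ mgf id Q (N * t))
    (hright : mgf id Q (N * (t + τ)) ≤ exp (N * (s * (t + τ) ^ 2 / 2 + 2 * γ)))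
    (hleft : mgf id Q (N * (t - τ)) ≤ exp (N * (s * (t - τ) ^ 2 / 2 + 2 * γ)))
    (hfour : 4 ≤ exp (N * γ)) :
    exp (N * (s * t ^ 2 / 2 - γ)) / 2 ≤
      Q.real (Metric.ball (s * t) (s * τ)) * exp (N * t * (s * t) + |N * t| * (s * τ)) := by
  have hsplit := mgf_id_le_ball_add_tails hQ (N * t) (s * t) (s * τ) (τ := N * τ) (by positivity)
  rw [← mul_add N, ← mul_sub N] at hsplit
  have hrightTail : exp (-(N * τ * (s * t + s * τ))) * mgf id Q (N * (t + τ)) ≤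
      exp (N * (s * t ^ 2 / 2 - 2 * γ)) := by
    refine (mul_le_mul_of_nonneg_left hright (exp_pos _).le).trans_eq ?_
    rw [← exp_add]
    congr 1
    linear_combination N / 2 * hγ
  have hleftTail : exp (N * τ * (s * t - s * τ)) * mgf id Q (N * (t - τ)) ≤
      exp (N * (s * t ^ 2 / 2 - 2 * γ)) := by
    refine (mul_le_mul_of_nonneg_left hleft (exp_pos _).le).trans_eq ?_
    rw [← exp_add]
    congr 1
    linear_combination N / 2 * hγ
  have hnegligible : 4 * exp (N * (s * t ^ 2 / 2 - 2 * γ)) ≤ exp (N * (s * t ^ 2 / 2 - γ)) := by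
    refine (mul_le_mul_of_nonneg_right hfour (exp_pos _).le).trans_eq ?_
    rw [← exp_add]
    ring_nf
  linarith

/-- Tilting by `x / s` centres the measures at `x`; the further tilts by `± ε / s` show that the
complement of the ball does not contribute. -/
lemma eventually_le_measureReal_ball (ha : Tendsto a atTop atTop) (hs : 0 < s)
    (hint : ∀ n t, Integrable (fun y => exp (t * y)) (P n))
    (hcgf : ∀ t, Tendsto (fun n => (a n)⁻¹ * cgf id (P n) (a n * t)) atTop (𝓝 (s * t ^ 2 / 2)))
    (x : ℝ) {ε : ℝ} (hε : 0 < ε) :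
    ∀ᶠ n in atTop, exp (a n * -(x ^ 2 / (2 * s) + |x| / s * ε + ε ^ 2 / (8 * s))) / 2 ≤
      (P n).real (Metric.ball x ε) := by
  set t := x / s with ht
  set τ := ε / s with hτ
  have hγ : 0 < s * τ ^ 2 / 8 := by positivity
  have hx : x = s * t := by rw [ht]; field_simp
  have hετ : ε = s * τ := by rw [hτ]; field_simp
  filter_upwards [eventually_exp_mul_le ha (fun n => mgf_pos (X := id) (hint n _)) (hcgf t)
      (sub_lt_self _ hγ),
    eventually_le_exp_mul ha (hcgf (t + τ)) (lt_add_of_pos_right _ (mul_pos two_pos hγ)),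
    eventually_le_exp_mul ha (hcgf (t - τ)) (lt_add_of_pos_right _ (mul_pos two_pos hγ)),
    ha.eventually_gt_atTop 0, eventually_const_le_exp_mul ha hγ 4]
    with n hcentre hright hleft hn hfour
  have hball := half_exp_le_measureReal_ball_mul (hint n) hn (by positivity)
    (mul_div_cancel₀ _ (by norm_num)) hcentre hright hleft hfour
  rw [← hx, ← hετ, ← div_le_iff₀ (exp_pos _), div_right_comm, ← exp_sub] at hball
  refine le_of_eq_of_le ?_ hball
  rw [abs_mul, abs_of_pos hn, hx, abs_mul, abs_of_pos hs, hετ]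
  congr 2
  field_simp
  ring

lemma eventually_exp_le_measureReal_ball (ha : Tendsto a atTop atTop) (hs : 0 < s)
    (hint : ∀ n t, Integrable (fun y => exp (t * y)) (P n))
    (hcgf : ∀ t, Tendsto (fun n => (a n)⁻¹ * cgf id (P n) (a n * t)) atTop (𝓝 (s * t ^ 2 / 2)))
    {x r ε : ℝ} (hε : 0 < ε) (hr : r < -(x ^ 2 / (2 * s))) :
    ∀ᶠ n in atTop, exp (a n * r) ≤ (P n).real (Metric.ball x ε) := by
  obtain ⟨q, hrq, hq⟩ := exists_between hr
  have hcont : Continuous fun η : ℝ => -(x ^ 2 / (2 * s) + |x| / s * η + η ^ 2 / (8 * s)) := by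
    fun_prop
  have hnear : ∀ᶠ η in 𝓝[>] 0, q < -(x ^ 2 / (2 * s) + |x| / s * η + η ^ 2 / (8 * s)) :=
    nhdsWithin_le_nhds (hcont.continuousAt.eventually_const_lt (by simpa using hq))
  obtain ⟨η, hη, hηε⟩ := (hnear.and (Ioo_mem_nhdsGT hε)).exists
  filter_upwards [eventually_le_measureReal_ball ha hs hint hcgf x hηε.1, ha.eventually_gt_atTop 0,
    eventually_const_le_exp_mul ha (sub_pos.2 hrq) 2] with n hball hn htwo
  have hrq' : 2 * exp (a n * r) ≤ exp (a n * q) := by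
    refine (mul_le_mul_of_nonneg_right htwo (exp_pos _).le).trans_eq ?_
    rw [← exp_add]
    ring_nf
  calc exp (a n * r) ≤ exp (a n * q) / 2 := by linarith
    _ ≤ exp (a n * -(x ^ 2 / (2 * s) + |x| / s * η + η ^ 2 / (8 * s))) / 2 := by gcongr
    _ ≤ (P n).real (Metric.ball x η) := hball
    _ ≤ (P n).real (Metric.ball x ε) := measureReal_mono (Metric.ball_subset_ball hηε.2.le)

lemma limsup_elog_le (ha : Tendsto a atTop atTop) (hs : 0 < s)
    (hint : ∀ n t, Integrable (fun y => exp (t * y)) (P n))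
    (hcgf : ∀ t, Tendsto (fun n => (a n)⁻¹ * cgf id (P n) (a n * t)) atTop (𝓝 (s * t ^ 2 / 2)))
    (C : Set ℝ) :
    limsup (fun n => (((a n)⁻¹ : ℝ) : EReal) * elog (P n C)) atTop ≤
      -(⨅ x ∈ closure C, ((ENNReal.ofReal (x ^ 2 / (2 * s)) : ℝ≥0∞) : EReal)) := by
  rcases C.eq_empty_or_nonempty with rfl | hC
  · refine limsup_le_of_le (by isBoundedDefault) ?_
    filter_upwards [ha.eventually_gt_atTop 0] with n hn
    simp [elog, EReal.coe_mul_bot_of_pos (inv_pos.2 hn)]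
  obtain ⟨y, hyC, hy⟩ := isClosed_closure.exists_infDist_eq_dist hC.closure (0 : ℝ)
  have hsub : C ⊆ {x | |y| ≤ |x|} := fun x hx => by
    have := Metric.infDist_le_dist_of_mem (x := (0 : ℝ)) (subset_closure hx)
    simpa [hy] using this
  refine le_trans ?_ (EReal.neg_le_neg_iff.2 (iInf₂_le y hyC))
  rw [coe_ofReal_sq_div hs, ← sq_abs y, ← EReal.coe_neg]
  refine EReal.le_of_forall_lt_iff_le.1 fun r hr => limsup_le_of_le (by isBoundedDefault) ?_
  filter_upwards [eventually_measureReal_le_abs_le ha hs hint hcgf (abs_nonneg y)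
    (EReal.coe_lt_coe_iff.1 hr), ha.eventually_gt_atTop 0] with n hn hpos
  exact inv_mul_elog_le hpos (measure_ne_top _ _) ((measureReal_mono hsub).trans hn)

lemma le_liminf_elog (ha : Tendsto a atTop atTop) (hs : 0 < s)
    (hint : ∀ n t, Integrable (fun y => exp (t * y)) (P n))
    (hcgf : ∀ t, Tendsto (fun n => (a n)⁻¹ * cgf id (P n) (a n * t)) atTop (𝓝 (s * t ^ 2 / 2)))
    (C : Set ℝ) :
    -(⨅ x ∈ interior C, ((ENNReal.ofReal (x ^ 2 / (2 * s)) : ℝ≥0∞) : EReal)) ≤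
      liminf (fun n => (((a n)⁻¹ : ℝ) : EReal) * elog (P n C)) atTop := by
  rw [EReal.neg_le]
  refine le_iInf₂ fun x hx => ?_
  rw [EReal.neg_le, coe_ofReal_sq_div hs, ← EReal.coe_neg]
  obtain ⟨ε, hε, hball⟩ := Metric.isOpen_iff.1 isOpen_interior x hx
  refine EReal.ge_of_forall_gt_iff_ge.1 fun r hr => le_liminf_of_le (by isBoundedDefault) ?_
  filter_upwards [eventually_exp_le_measureReal_ball ha hs hint hcgf hε
    (EReal.coe_lt_coe_iff.1 hr), ha.eventually_gt_atTop 0] with n hn hpos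
  exact le_inv_mul_elog hpos (hn.trans (measureReal_mono (hball.trans interior_subset)))

theorem hasLDP_of_tendsto_cgf (ha : Tendsto a atTop atTop) (hs : 0 < s)
    (hint : ∀ n t, Integrable (fun y => exp (t * y)) (P n))
    (hcgf : ∀ t, Tendsto (fun n => (a n)⁻¹ * cgf id (P n) (a n * t)) atTop (𝓝 (s * t ^ 2 / 2))) :
    HasLDP P a fun x => ENNReal.ofReal (x ^ 2 / (2 * s)) :=
  ⟨continuous_ofReal_sq_div.lowerSemicontinuous, isCompact_ofReal_sq_div_le hs, fun C _ =>
    ⟨le_liminf_elog ha hs hint hcgf C, limsup_elog_le ha hs hint hcgf C⟩⟩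

end GartnerEllis

section LaplacePrinciple

variable {a : ℕ → ℝ} {g : ℕ → ℝ → ℝ} {φ : ℝ → ℝ} {z₀ C δ : ℝ}

lemma integrable_exp_sub_mul_sq (C : ℝ) (hδ : 0 < δ) :
    Integrable fun z : ℝ => exp (C - δ * z ^ 2) := by
  simpa only [sub_eq_add_neg, exp_add, neg_mul] using
    (integrable_exp_neg_mul_sq hδ).const_mul (exp C)

lemma eventually_forall_le_add (hlim : TendstoLocallyUniformly g φ atTop)
    (hmax : ∀ z, φ z ≤ φ z₀) (hδ : 0 < δ) (hbound : ∀ᶠ n in atTop, ∀ z, g n z ≤ C - δ * z ^ 2)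
    {ε : ℝ} (hε : 0 < ε) : ∀ᶠ n in atTop, ∀ z, g n z ≤ φ z₀ + ε := by
  have hfar : ∀ᶠ R : ℝ in atTop, C - φ z₀ ≤ δ * R ^ 2 :=
    ((tendsto_pow_atTop two_ne_zero).const_mul_atTop hδ).eventually_ge_atTop _
  obtain ⟨R, hR, hR0⟩ := (hfar.and (eventually_ge_atTop 0)).exists
  have hnear := Metric.tendstoUniformlyOn_iff.1
    (tendstoLocallyUniformly_iff_forall_isCompact.1 hlim _ (isCompact_closedBall 0 R)) ε hε
  filter_upwards [hbound, hnear] with n hbound hnear z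
  rcases le_or_gt |z| R with hz | hz
  · have := hnear z (by simpa using hz)
    rw [dist_comm, Real.dist_eq, abs_lt] at this
    linarith [hmax z, this.2]
  · have hsq : R ^ 2 ≤ z ^ 2 := (pow_le_pow_left₀ hR0 hz.le 2).trans_eq (sq_abs z)
    nlinarith [hbound z]

lemma eventually_integrable_exp_mul (ha : Tendsto a atTop atTop) (hg : ∀ n, Continuous (g n))
    (hδ : 0 < δ) (hbound : ∀ᶠ n in atTop, ∀ z, g n z ≤ C - δ * z ^ 2) :
    ∀ᶠ n in atTop, Integrable fun z => exp (a n * g n z) := by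
  filter_upwards [hbound, ha.eventually_gt_atTop 0] with n hbound ha
  refine (integrable_exp_sub_mul_sq (a n * C) (mul_pos ha hδ)).mono'
    (by have := hg n; fun_prop) (.of_forall fun z => ?_)
  rw [norm_of_nonneg (exp_pos _).le, exp_le_exp]
  linarith [mul_le_mul_of_nonneg_left (hbound z) ha.le]

lemma eventually_integral_exp_mul_le (ha : Tendsto a atTop atTop)
    (hlim : TendstoLocallyUniformly g φ atTop) (hmax : ∀ z, φ z ≤ φ z₀) (hδ : 0 < δ)
    (hbound : ∀ᶠ n in atTop, ∀ z, g n z ≤ C - δ * z ^ 2) {r : ℝ} (hr : φ z₀ < r) :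
    ∀ᶠ n in atTop, ∫ z, exp (a n * g n z) ≤ exp (a n * r) := by
  obtain ⟨s, hs, hsr⟩ := exists_between hr
  set K := ∫ z, exp (C - δ * z ^ 2)
  filter_upwards [hbound, eventually_forall_le_add hlim hmax hδ hbound (sub_pos.2 hs),
    ha.eventually_ge_atTop 1, eventually_const_le_exp_mul ha (sub_pos.2 hsr) (exp (-s) * K)]
    with n hbound hle ha hK
  have hpoint (z : ℝ) : exp (a n * g n z) ≤ exp ((a n - 1) * s) * exp (C - δ * z ^ 2) := by
    rw [← exp_add, exp_le_exp]
    nlinarith [hbound z, mul_le_mul_of_nonneg_left (hle z) (sub_nonneg.2 ha)]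
  calc ∫ z, exp (a n * g n z) ≤ ∫ z, exp ((a n - 1) * s) * exp (C - δ * z ^ 2) :=
        integral_mono_of_nonneg (.of_forall fun _ => (exp_pos _).le)
          ((integrable_exp_sub_mul_sq C hδ).const_mul _) (.of_forall hpoint)
    _ = exp (a n * s) * (exp (-s) * K) := by
        rw [integral_const_mul, ← mul_assoc, ← exp_add]; congr 2; ring
    _ ≤ exp (a n * s) * exp (a n * (r - s)) := by gcongr
    _ = exp (a n * r) := by rw [← exp_add]; ring_nf

lemma eventually_le_integral_exp_mul (ha : Tendsto a atTop atTop) (hg : ∀ n, Continuous (g n))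
    (hlim : TendstoLocallyUniformly g φ atTop) (hδ : 0 < δ)
    (hbound : ∀ᶠ n in atTop, ∀ z, g n z ≤ C - δ * z ^ 2) {r : ℝ} (hr : r < φ z₀) :
    ∀ᶠ n in atTop, exp (a n * r) ≤ ∫ z, exp (a n * g n z) := by
  obtain ⟨s, hrs, hs⟩ := exists_between hr
  obtain ⟨u, hsu, hu⟩ := exists_between hs
  have hφ : Continuous φ := hlim.continuous (Frequently.of_forall hg)
  obtain ⟨t, ht, hnear⟩ := Metric.tendstoLocallyUniformly_iff.1 hlim (u - s) (sub_pos.2 hsu) z₀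
  obtain ⟨ρ, hρ, hball⟩ := Metric.mem_nhds_iff.1
    (inter_mem ht (hφ.continuousAt.eventually_const_lt hu))
  filter_upwards [hnear, eventually_integrable_exp_mul ha hg hδ hbound, ha.eventually_gt_atTop 0,
    eventually_const_le_exp_mul ha (sub_pos.2 hrs) (2 * ρ)⁻¹] with n hnear hint ha hρn
  have hle : ∀ z ∈ Metric.ball z₀ ρ, exp (a n * s) ≤ exp (a n * g n z) := fun z hz => by
    have hgz := (abs_lt.1 (hnear z (hball hz).1)).2
    have hφz : u < φ z := (hball hz).2
    gcongr
    linarith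
  calc exp (a n * r) = exp (a n * s) * (exp (a n * (s - r)))⁻¹ := by
        rw [← exp_neg, ← exp_add]; ring_nf
    _ ≤ exp (a n * s) * (2 * ρ) := by
        gcongr
        exact inv_le_of_inv_le₀ (by positivity) hρn
    _ = exp (a n * s) * volume.real (Metric.ball z₀ ρ) := by rw [Real.volume_real_ball hρ.le]
    _ ≤ ∫ z in Metric.ball z₀ ρ, exp (a n * g n z) :=
        setIntegral_ge_of_const_le_real measurableSet_ball measure_ball_lt_top.ne hle
          hint.integrableOn
    _ ≤ ∫ z, exp (a n * g n z) :=
        setIntegral_le_integral hint (.of_forall fun _ => (exp_pos _).le)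

theorem tendsto_inv_mul_log_integral_exp_mul (ha : Tendsto a atTop atTop)
    (hg : ∀ n, Continuous (g n)) (hlim : TendstoLocallyUniformly g φ atTop)
    (hmax : ∀ z, φ z ≤ φ z₀) (hδ : 0 < δ)
    (hbound : ∀ᶠ n in atTop, ∀ z, g n z ≤ C - δ * z ^ 2) :
    Tendsto (fun n => (a n)⁻¹ * log (∫ z, exp (a n * g n z))) atTop (𝓝 (φ z₀)) :=
  tendsto_inv_mul_log ha
    (fun _ hr => eventually_integral_exp_mul_le ha hlim hmax hδ hbound hr)
    (fun _ hr => eventually_le_integral_exp_mul ha hg hlim hδ hbound hr)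

end LaplacePrinciple

section GibbsMeasure

variable {β : ℝ} {h : ℕ → ℝ} {n : ℕ}

lemma gibbsWeight_pos (σ : Fin n → Bool) : 0 < gibbsWeight β h n σ := exp_pos _

lemma sum_gibbsWeight_pos : 0 < ∑ σ : Fin n → Bool, gibbsWeight β h n σ :=
  Finset.sum_pos (fun σ _ => gibbsWeight_pos σ) Finset.univ_nonempty

instance : IsProbabilityMeasure (gibbsMeasure β h n) where
  measure_univ := by
    have hZ : 0 < ∑ σ : Fin n → Bool, gibbsWeight β h n σ := sum_gibbsWeight_pos
    simp only [gibbsMeasure, Measure.smul_apply, Measure.finsetSum_apply, measure_univ, smul_eq_mul,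
      mul_one]
    rw [← ENNReal.ofReal_sum_of_nonneg fun σ _ => (gibbsWeight_pos σ).le]
    exact ENNReal.inv_mul_cancel (ENNReal.ofReal_pos.2 hZ).ne' ENNReal.ofReal_ne_top

lemma integral_gibbsMeasure (f : (Fin n → Bool) → ℝ) :
    ∫ σ, f σ ∂gibbsMeasure β h n =
      (∑ σ : Fin n → Bool, gibbsWeight β h n σ)⁻¹ * ∑ σ, gibbsWeight β h n σ * f σ := by
  rw [gibbsMeasure, integral_smul_measure, integral_finsetSum_measure fun σ _ =>
      (integrable_dirac (by finiteness)).smul_measure ENNReal.ofReal_ne_top, ENNReal.toReal_inv,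
    ENNReal.toReal_ofReal sum_gibbsWeight_pos.le, smul_eq_mul]
  simp only [integral_smul_measure, integral_dirac, ENNReal.toReal_ofReal (gibbsWeight_pos _).le,
    smul_eq_mul]

end GibbsMeasure

section HubbardStratonovich

variable {β : ℝ} {h : ℕ → ℝ} {n : ℕ}

lemma integrable_exp_neg_mul_sq_add_mul {b : ℝ} (hb : 0 < b) (c : ℝ) :
    Integrable fun y : ℝ => exp (-b * y ^ 2 + c * y) := by
  convert ((integrable_exp_neg_mul_sq hb).comp_sub_right (c / (2 * b))).const_mul
    (exp (c ^ 2 / (4 * b))) using 2 with y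
  rw [← exp_add]
  congr 1
  field_simp
  ring

lemma integral_exp_neg_mul_sq_add_mul {b : ℝ} (hb : 0 < b) (c : ℝ) :
    ∫ y : ℝ, exp (-b * y ^ 2 + c * y) = √(π / b) * exp (c ^ 2 / (4 * b)) := by
  have hsquare (y : ℝ) : exp (-b * y ^ 2 + c * y) =
      exp (-b * (y - c / (2 * b)) ^ 2) * exp (c ^ 2 / (4 * b)) := by
    rw [← exp_add]
    congr 1
    field_simp
    ring
  simp only [hsquare]
  rw [integral_mul_const, integral_sub_right_eq_self (fun y : ℝ => exp (-b * y ^ 2)),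
    integral_gaussian]

lemma sum_exp_sum_mul_spin (u : Fin n → ℝ) :
    ∑ σ : Fin n → Bool, exp (∑ i, u i * spin (σ i)) = ∏ i, 2 * cosh (u i) := by
  have hspin (i : Fin n) : 2 * cosh (u i) = ∑ b : Bool, exp (u i * spin b) := by
    rw [Fintype.sum_bool, cosh_eq, spin, spin, if_pos rfl, if_neg Bool.false_ne_true, mul_one,
      mul_neg_one]
    ring
  simp only [hspin, Fintype.prod_sum, exp_sum]

lemma continuous_Gn : Continuous (Gn β h n) := by
  unfold Gn
  fun_prop (disch := exact fun _ => (cosh_pos _).ne')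

lemma two_pow_mul_exp_mul_sub_Gn (hn : n ≠ 0) (s y : ℝ) :
    2 ^ n * exp (n * (s * y - Gn β h n y)) =
      ∑ σ : Fin n → Bool, exp (β * ∑ i : Fin n, h i * spin (σ i)) *
        exp (-(n * β / 2) * y ^ 2 + (β * mag σ + n * s) * y) := by
  have hcosh : exp (∑ i : Fin n, log (cosh (β * (y + h i)))) =
      ∏ i : Fin n, cosh (β * (y + h i)) := by
    simp only [exp_sum, exp_log (cosh_pos _)]
  have hmag (σ : Fin n → Bool) : ∑ i : Fin n, β * (y + h i) * spin (σ i) =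
      β * y * mag σ + β * ∑ i : Fin n, h i * spin (σ i) := by
    simp only [mag, Finset.mul_sum, ← Finset.sum_add_distrib]
    exact Finset.sum_congr rfl fun i _ => by ring
  calc 2 ^ n * exp (n * (s * y - Gn β h n y))
      = exp (-(n * β / 2) * y ^ 2 + n * s * y) * ∏ i : Fin n, 2 * cosh (β * (y + h i)) := by
        rw [Finset.prod_mul_distrib, Finset.prod_const, Finset.card_univ, Fintype.card_fin, ← hcosh,
          mul_left_comm, ← exp_add, Gn]
        congr 2
        field_simp
        ring
    _ = _ := by
        rw [← sum_exp_sum_mul_spin, Finset.mul_sum]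
        refine Finset.sum_congr rfl fun σ _ => ?_
        rw [← exp_add, ← exp_add, hmag]
        ring_nf

lemma two_pow_mul_integral_exp_mul_sub_Gn (hβ : 0 < β) (hn : n ≠ 0) (s : ℝ) :
    2 ^ n * ∫ y : ℝ, exp (n * (s * y - Gn β h n y)) =
      √(π / (n * β / 2)) * exp (n * s ^ 2 / (2 * β)) *
        ∑ σ : Fin n → Bool, gibbsWeight β h n σ * exp (s * mag σ) := by
  have hb : 0 < n * β / 2 := by positivity
  rw [← integral_const_mul]
  simp only [two_pow_mul_exp_mul_sub_Gn hn]
  rw [integral_finsetSum _ fun σ _ => (integrable_exp_neg_mul_sq_add_mul hb _).const_mul _,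
    Finset.mul_sum]
  refine Finset.sum_congr rfl fun σ _ => ?_
  have hexp : β * ∑ i : Fin n, h i * spin (σ i) + (β * mag σ + n * s) ^ 2 / (4 * (n * β / 2)) =
      n * s ^ 2 / (2 * β) + (β / (2 * n) * mag σ ^ 2 + β * ∑ i : Fin n, h i * spin (σ i) +
        s * mag σ) := by
    field_simp
    ring
  rw [integral_const_mul, integral_exp_neg_mul_sq_add_mul hb, gibbsWeight, mul_left_comm, mul_assoc,
    ← exp_add, ← exp_add, ← exp_add, hexp]

lemma integral_exp_mul_sub_Gn_pos (hβ : 0 < β) (hn : n ≠ 0) (s : ℝ) :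
    0 < ∫ y : ℝ, exp (n * (s * y - Gn β h n y)) := by
  have hsum : 0 < ∑ σ : Fin n → Bool, gibbsWeight β h n σ * exp (s * mag σ) :=
    Finset.sum_pos (fun σ _ => mul_pos (gibbsWeight_pos σ) (exp_pos _)) Finset.univ_nonempty
  refine pos_of_mul_pos_right (a := 2 ^ n) ?_ (by positivity)
  rw [two_pow_mul_integral_exp_mul_sub_Gn hβ hn]
  positivity

lemma mgf_mag_gibbsMeasure (hβ : 0 < β) (hn : n ≠ 0) (s : ℝ) :
    mgf mag (gibbsMeasure β h n) s = exp (-(n * s ^ 2 / (2 * β))) *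
      ((∫ y : ℝ, exp (n * (s * y - Gn β h n y))) / ∫ y : ℝ, exp (n * (0 * y - Gn β h n y))) := by
  have hZ : 0 < ∑ σ : Fin n → Bool, gibbsWeight β h n σ := sum_gibbsWeight_pos
  have hHS (s : ℝ) := eq_div_of_mul_eq (by positivity)
    ((mul_comm _ _).trans (two_pow_mul_integral_exp_mul_sub_Gn (h := h) hβ hn s))
  rw [hHS s, hHS 0, mgf, integral_gibbsMeasure, exp_neg]
  simp only [zero_mul, exp_zero, mul_one, ne_eq, OfNat.ofNat_ne_zero, not_false_eq_true, zero_pow,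
    mul_zero, zero_div]
  field_simp

lemma cgf_mag_gibbsMeasure (hβ : 0 < β) (hn : n ≠ 0) (s : ℝ) :
    cgf mag (gibbsMeasure β h n) s = log (∫ y : ℝ, exp (n * (s * y - Gn β h n y))) -
      log (∫ y : ℝ, exp (n * (0 * y - Gn β h n y))) - n * s ^ 2 / (2 * β) := by
  have hs := integral_exp_mul_sub_Gn_pos (h := h) hβ hn s
  have h0 := integral_exp_mul_sub_Gn_pos (h := h) hβ hn 0
  rw [cgf, mgf_mag_gibbsMeasure hβ hn, log_mul (exp_pos _).ne' (div_pos hs h0).ne', log_exp,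
    log_div hs.ne' h0.ne']
  ring

end HubbardStratonovich

section RescaledHamiltonian

variable {β : ℝ} {h : ℕ → ℝ} {n : ℕ} {b : ℝ}

/-- The fluctuations of `Gn` around the origin on the scale `b / n` of the field conjugate to the
magnetization, normalised so that a quadratic function is left unchanged. -/
def rescaledGn (β : ℝ) (h : ℕ → ℝ) (n : ℕ) (b z : ℝ) : ℝ :=
  (n / b) ^ 2 * (Gn β h n (b / n * z) - Gn β h n 0)

lemma continuous_rescaledGn : Continuous (rescaledGn β h n b) := by
  have := continuous_Gn (β := β) (h := h) (n := n)
  unfold rescaledGn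
  fun_prop

lemma integral_exp_mul_sub_Gn_eq (hn : n ≠ 0) (hb : 0 < b) (t : ℝ) :
    ∫ y : ℝ, exp (n * (b / n * t * y - Gn β h n y)) = b / n * exp (-(n * Gn β h n 0)) *
      ∫ z : ℝ, exp (b ^ 2 / n * (t * z - rescaledGn β h n b z)) := by
  have hscale (z : ℝ) : exp (n * (b / n * t * (b / n * z) - Gn β h n (b / n * z))) =
      exp (-(n * Gn β h n 0)) * exp (b ^ 2 / n * (t * z - rescaledGn β h n b z)) := by
    rw [← exp_add, rescaledGn]
    congr 1
    field_simp
    ring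
  have hsubst := Measure.integral_comp_mul_left
    (fun y : ℝ => exp (n * (b / n * t * y - Gn β h n y))) (b / n)
  simp only [hscale] at hsubst
  rw [integral_const_mul, abs_of_pos (by positivity), smul_eq_mul] at hsubst
  rw [mul_assoc, hsubst, mul_inv_cancel_left₀ (by positivity)]

lemma cgf_rescaled_mag (hβ : 0 < β) (hn : n ≠ 0) (hb : 0 < b) (t : ℝ) :
    cgf id ((gibbsMeasure β h n).map fun σ => mag σ / b) (b ^ 2 / n * t) =
      log (∫ z : ℝ, exp (b ^ 2 / n * (t * z - rescaledGn β h n b z))) -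
      log (∫ z : ℝ, exp (b ^ 2 / n * (0 * z - rescaledGn β h n b z))) -
      b ^ 2 / n * (t ^ 2 / (2 * β)) := by
  have hpos (t : ℝ) : 0 < ∫ z : ℝ, exp (b ^ 2 / n * (t * z - rescaledGn β h n b z)) := by
    refine pos_of_mul_pos_right (a := b / n * exp (-(n * Gn β h n 0))) ?_ (by positivity)
    rw [← integral_exp_mul_sub_Gn_eq hn hb]
    exact integral_exp_mul_sub_Gn_pos hβ hn _
  have hmap : cgf id ((gibbsMeasure β h n).map fun σ => mag σ / b) (b ^ 2 / n * t) =
      cgf mag (gibbsMeasure β h n) (b / n * t) := by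
    rw [cgf, mgf_id_map (measurable_of_finite _).aemeasurable, cgf, mgf, mgf]
    congr! 4 with σ
    field_simp
  have h0 := integral_exp_mul_sub_Gn_eq (β := β) (h := h) hn hb 0
  rw [mul_zero] at h0
  rw [hmap, cgf_mag_gibbsMeasure hβ hn, integral_exp_mul_sub_Gn_eq hn hb, h0,
    log_mul (by positivity) (hpos t).ne', log_mul (by positivity) (hpos 0).ne']
  field_simp
  ring

lemma integrable_exp_rescaled_mag (t : ℝ) :
    Integrable (fun y => exp (t * y)) ((gibbsMeasure β h n).map fun σ => mag σ / b) :=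
  (integrable_map_measure (by fun_prop) (measurable_of_finite _).aemeasurable).2 .of_finite

end RescaledHamiltonian

section ModerateDeviations

variable {β l δ : ℝ} {h : ℕ → ℝ} {F : ℝ → ℝ} {b ε : ℕ → ℝ}

lemma rescaledGn_sub_eq {n : ℕ} {b : ℝ} (hnb : n / b ≠ 0) (z : ℝ) :
    rescaledGn β h n b z - l / 2 * z ^ 2 =
      (n / b) ^ 2 * (F (b / n * z) - F 0 - l / 2 * (b / n * z) ^ 2) +
      (n / b) ^ 2 * (Gn β h n (b / n * z) - Gn β h n 0 - (F (b / n * z) - F 0)) := by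
  have hcancel : (n / b) ^ 2 * (b / n) ^ 2 = 1 := by
    obtain ⟨hn, hb⟩ := div_ne_zero_iff.1 hnb
    field_simp
  rw [rescaledGn]
  linear_combination l / 2 * z ^ 2 * hcancel

lemma abs_sq_mul_perturbation_le {n : ℕ} {b e : ℝ} (hnb : 0 < n / b)
    (hpert : ∀ x, |Gn β h n x - Gn β h n 0 - (F x - F 0)| ≤ e * |x|) (z : ℝ) :
    |(n / b) ^ 2 * (Gn β h n (b / n * z) - Gn β h n 0 - (F (b / n * z) - F 0))| ≤
      n / b * e * |z| := by
  have hbn : 0 < b / n := by rwa [← inv_pos, inv_div]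
  calc _ ≤ (n / b) ^ 2 * (e * |b / n * z|) := by
        rw [abs_mul, abs_of_pos (by positivity)]
        gcongr
        exact hpert _
    _ = n / b * e * |z| := by
        rw [abs_mul, abs_of_pos hbn, ← inv_div b n]
        field_simp

lemma tendstoLocallyUniformly_rescaledGn
    (hF : (fun x => F x - F 0 - l / 2 * x ^ 2) =o[𝓝 0] fun x => x ^ 2)
    (hb : Tendsto (fun n => n / b n) atTop atTop)
    (hε : Tendsto (fun n => n / b n * ε n) atTop (𝓝 0))
    (hpert : ∀ᶠ n in atTop, ∀ x, |Gn β h n x - Gn β h n 0 - (F x - F 0)| ≤ ε n * |x|) :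
    TendstoLocallyUniformly (fun n => rescaledGn β h n (b n)) (fun z => l / 2 * z ^ 2) atTop := by
  refine tendstoLocallyUniformly_iff_forall_tendsto.2 fun z₀ => ?_
  rw [tendsto_uniformity_iff_dist_tendsto_zero]
  have hpos : ∀ᶠ p : ℕ × ℝ in atTop ×ˢ 𝓝 z₀, 0 < p.1 / b p.1 :=
    tendsto_fst.eventually (hb.eventually_gt_atTop 0)
  have hz : Tendsto (fun p : ℕ × ℝ => p.2) (atTop ×ˢ 𝓝 z₀) (𝓝 z₀) := tendsto_snd
  have hscale : Tendsto (fun p : ℕ × ℝ => b p.1 / p.1 * p.2) (atTop ×ˢ 𝓝 z₀) (𝓝 0) := by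
    simpa [Function.comp_def] using (hb.inv_tendsto_atTop.comp tendsto_fst).mul hz
  have hmain : Tendsto (fun p : ℕ × ℝ => (p.1 / b p.1) ^ 2 *
      (F (b p.1 / p.1 * p.2) - F 0 - l / 2 * (b p.1 / p.1 * p.2) ^ 2)) (atTop ×ˢ 𝓝 z₀) (𝓝 0) := by
    have hsq : (fun p : ℕ × ℝ => (p.1 / b p.1) ^ 2 * (b p.1 / p.1 * p.2) ^ 2) =O[atTop ×ˢ 𝓝 z₀]
        fun _ => (1 : ℝ) := by
      refine ((hz.pow 2).isBigO_one ℝ).congr' ?_ .rfl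
      filter_upwards [hpos] with p hp
      obtain ⟨hn, hb⟩ := div_ne_zero_iff.1 hp.ne'
      field_simp
    exact (Asymptotics.isLittleO_one_iff ℝ).1 <|
      ((Asymptotics.isBigO_refl _ _).mul_isLittleO (hF.comp_tendsto hscale)).trans_isBigO hsq
  have hrest : Tendsto (fun p : ℕ × ℝ => p.1 / b p.1 * ε p.1 * |p.2|) (atTop ×ˢ 𝓝 z₀) (𝓝 0) := by
    simpa using (hε.comp tendsto_fst).mul hz.abs
  refine squeeze_zero' (.of_forall fun _ => dist_nonneg) ?_
    (by simpa only [abs_zero, add_zero] using hmain.abs.add hrest)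
  filter_upwards [hpos, tendsto_fst.eventually hpert] with p hp hpert
  rw [dist_comm, Real.dist_eq, rescaledGn_sub_eq (F := F) hp.ne']
  exact (abs_add_le _ _).trans
    (add_le_add_right (abs_sq_mul_perturbation_le hp hpert p.2) _)

lemma eventually_le_rescaledGn (hδ : ∀ x, δ * x ^ 2 ≤ F x - F 0)
    (hb : Tendsto (fun n => n / b n) atTop atTop)
    (hε : Tendsto (fun n => n / b n * ε n) atTop (𝓝 0))
    (hpert : ∀ᶠ n in atTop, ∀ x, |Gn β h n x - Gn β h n 0 - (F x - F 0)| ≤ ε n * |x|) :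
    ∀ᶠ n in atTop, ∀ z, δ * z ^ 2 - |z| ≤ rescaledGn β h n (b n) z := by
  filter_upwards [hb.eventually_gt_atTop 0, hε.eventually_le_const zero_lt_one, hpert]
    with n hpos hle hpert z
  have hmain := mul_le_mul_of_nonneg_left (hδ (b n / n * z)) (sq_nonneg (n / b n))
  have hrest := (abs_sq_mul_perturbation_le hpos hpert z).trans
    (mul_le_mul_of_nonneg_right hle (abs_nonneg z))
  have hsplit := rescaledGn_sub_eq (β := β) (h := h) (F := F) (l := 2 * δ) hpos.ne' z
  linarith [(abs_le.1 hrest).1]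

lemma tendsto_inv_mul_log_integral_rescaledGn (hl : 0 < l) (hδ : 0 < δ)
    (hspeed : Tendsto (fun n => b n ^ 2 / n) atTop atTop)
    (hlim : TendstoLocallyUniformly (fun n => rescaledGn β h n (b n)) (fun z => l / 2 * z ^ 2)
      atTop)
    (hbound : ∀ᶠ n in atTop, ∀ z, δ * z ^ 2 - |z| ≤ rescaledGn β h n (b n) z) (t : ℝ) :
    Tendsto (fun n : ℕ => (b n ^ 2 / n)⁻¹ *
      log (∫ z : ℝ, exp (b n ^ 2 / n * (t * z - rescaledGn β h n (b n) z)))) atTop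
      (𝓝 (t ^ 2 / (2 * l))) := by
  have hmax (z : ℝ) : t * z - l / 2 * z ^ 2 ≤ t * (t / l) - l / 2 * (t / l) ^ 2 := by
    rw [← sub_nonneg]
    convert_to 0 ≤ l / 2 * (z - t / l) ^ 2
    · field_simp
      ring
    · positivity
  have hcoercive : ∀ᶠ n in atTop, ∀ z, t * z - rescaledGn β h n (b n) z ≤
      (|t| + 1) ^ 2 / (2 * δ) - δ / 2 * z ^ 2 := by
    filter_upwards [hbound] with n hn z
    have htz : t * z ≤ |t| * |z| := (le_abs_self _).trans_eq (abs_mul t z)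
    have hsq : 0 ≤ δ / 2 * (|z| - (|t| + 1) / δ) ^ 2 := by positivity
    have hexpand : δ / 2 * (|z| - (|t| + 1) / δ) ^ 2 =
        δ / 2 * z ^ 2 - (|t| + 1) * |z| + (|t| + 1) ^ 2 / (2 * δ) := by
      rw [← sq_abs z]
      field_simp
      ring
    linarith [hn z]
  have hlaplace := tendsto_inv_mul_log_integral_exp_mul hspeed
    (g := fun n z => t * z - rescaledGn β h n (b n) z)
    (fun n => (continuous_const_mul t).sub continuous_rescaledGn)
    (by simpa only [Metric.tendstoLocallyUniformly_iff, dist_sub_left] using hlim) hmax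
    (half_pos hδ) hcoercive
  convert hlaplace using 2
  field_simp
  ring

theorem hasLDP_gibbsMeasure_of_isMinOfType {ν : Measure ℝ} (hmin : IsMinOfType β ν 0 1 l)
    (hlβ : l < β) (hG : ContDiff ℝ 2 (G β ν)) (hδ : 0 < δ)
    (hcoercive : ∀ x, δ * x ^ 2 ≤ G β ν x - G β ν 0)
    (hspeed : Tendsto (fun n => b n ^ 2 / n) atTop atTop)
    (hb : Tendsto (fun n => n / b n) atTop atTop)
    (hε : Tendsto (fun n => n / b n * ε n) atTop (𝓝 0))
    (hpert : ∀ᶠ n in atTop, ∀ x, |Gn β h n x - Gn β h n 0 - (G β ν x - G β ν 0)| ≤ ε n * |x|) :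
    HasLDP (fun n => (gibbsMeasure β h n).map fun σ => mag σ / b n) (fun n => b n ^ 2 / n)
      (mdpRate β l 1) := by
  have hl : 0 < l := hmin.2.1
  have hβ : 0 < β := hl.trans hlβ
  have hlog (t : ℝ) := tendsto_inv_mul_log_integral_rescaledGn hl hδ hspeed
    (tendstoLocallyUniformly_rescaledGn (by simpa using hmin.isLittleO_sub_sq hG) hb hε hpert)
    (eventually_le_rescaledGn hcoercive hb hε hpert) t
  have (n : ℕ) : IsProbabilityMeasure ((gibbsMeasure β h n).map fun σ => mag σ / b n) :=
    Measure.isProbabilityMeasure_map (measurable_of_finite _).aemeasurable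
  refine hasLDP_of_tendsto_cgf (s := l⁻¹ - β⁻¹) hspeed (sub_pos.2 (inv_strictAnti₀ hl hlβ))
    (fun n t => integrable_exp_rescaled_mag t) fun t => ?_
  have hlim := ((hlog t).sub (hlog 0)).sub_const (t ^ 2 / (2 * β))
  convert hlim.congr' ?_ using 2
  · field_simp
    ring
  · filter_upwards [eventually_ne_atTop 0, hb.eventually_gt_atTop 0] with n hn hpos
    have hbn : 0 < b n := (div_pos_iff_of_pos_left (by positivity)).1 hpos
    rw [cgf_rescaled_mag hβ hn hbn]
    field_simp

end ModerateDeviations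

section DichotomousApproximation

variable {β c : ℝ} {h : ℕ → ℝ} {n : ℕ}

lemma abs_log_cosh_sub_log_cosh_le (x y : ℝ) : |log (cosh y) - log (cosh x)| ≤ |y - x| := by
  have hderiv (z : ℝ) : ‖deriv (fun x => log (cosh x)) z‖ ≤ 1 := by
    rw [(hasDerivAt_log_cosh z).deriv]
    exact (abs_tanh_lt_one z).le
  simpa using convex_univ.norm_image_sub_le_of_norm_deriv_le
    (fun z _ => (hasDerivAt_log_cosh z).differentiableAt) (fun z _ => hderiv z)
    (Set.mem_univ x) (Set.mem_univ y)

lemma Gn_sub_G_dichotomousLaw (hc : c ≠ 0) (hn : n ≠ 0) (hh : ∀ i, h i = c ∨ h i = -c) (x : ℝ) :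
    Gn β h n x - G β (dichotomousLaw c) x = (∑ i : Fin n, h i) / n *
      ((log (cosh (β * (x - c))) - log (cosh (β * (x + c)))) / (2 * c)) := by
  have haffine (i : ℕ) : log (cosh (β * (x + h i))) =
      (log (cosh (β * (x + c))) + log (cosh (β * (x - c)))) / 2 -
        h i * ((log (cosh (β * (x - c))) - log (cosh (β * (x + c)))) / (2 * c)) := by
    rcases hh i with hi | hi <;> rw [hi]
    · field_simp
      ring
    · rw [← sub_eq_add_neg]
      field_simp
      ring
  rw [Gn, G_dichotomousLaw]
  simp only [haffine, Finset.sum_sub_distrib, Finset.sum_const, Finset.card_univ, Fintype.card_fin,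
    nsmul_eq_mul, ← Finset.sum_mul]
  field_simp
  ring

lemma abs_Gn_sub_G_dichotomousLaw_le (hβ : 0 < β) (hc : 0 < c) (hn : n ≠ 0)
    (hh : ∀ i, h i = c ∨ h i = -c) (x : ℝ) :
    |Gn β h n x - Gn β h n 0 - (G β (dichotomousLaw c) x - G β (dichotomousLaw c) 0)| ≤
      β / c * (|∑ i : Fin n, h i| / n) * |x| := by
  have hzero : Gn β h n 0 - G β (dichotomousLaw c) 0 = 0 := by
    simp [Gn_sub_G_dichotomousLaw hc.ne' hn hh]
  have hlip : |log (cosh (β * (x - c))) - log (cosh (β * (x + c)))| ≤ 2 * β * |x| := by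
    rw [← cosh_neg (β * (x - c))]
    refine (abs_log_cosh_sub_log_cosh_le _ _).trans_eq ?_
    rw [show -(β * (x - c)) - β * (x + c) = -(2 * β * x) by ring, abs_neg, abs_mul,
      abs_of_pos (by positivity)]
  rw [sub_sub_sub_comm, hzero, sub_zero, Gn_sub_G_dichotomousLaw hc.ne' hn hh, abs_mul, abs_div,
    abs_div, Nat.abs_cast, abs_of_pos (by positivity : 0 < 2 * c)]
  calc _ ≤ |∑ i : Fin n, h i| / n * (2 * β * |x| / (2 * c)) := by gcongr
    _ = β / c * (|∑ i : Fin n, h i| / n) * |x| := by field_simp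

end DichotomousApproximation

section Fluctuations

variable {Ω : Type*} [MeasurableSpace Ω] {μ : Measure Ω} {X : Ω → ℝ} {S : ℕ → Ω → ℝ} {c : ℝ≥0}

lemma measureReal_le_abs_le_of_hasSubgaussianMGF (hX : HasSubgaussianMGF X c μ) {x : ℝ}
    (hx : 0 ≤ x) :
    μ.real {ω | x ≤ |X ω|} ≤ 2 * exp (-x ^ 2 / (2 * c)) := by
  have hunion : {ω | x ≤ |X ω|} = {ω | x ≤ X ω} ∪ {ω | x ≤ (-X) ω} := by
    ext ω
    exact le_abs (a := x) (b := X ω)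
  rw [hunion, two_mul]
  exact (measureReal_union_le _ _).trans
    (add_le_add (hX.measure_ge_le hx) (hX.neg.measure_ge_le hx))

lemma ae_eventually_abs_lt_of_hasSubgaussianMGF [IsFiniteMeasure μ] (hc : c ≠ 0)
    (hS : ∀ n : ℕ, HasSubgaussianMGF (S n) (n * c) μ) :
    ∀ᵐ ω ∂μ, ∀ᶠ n : ℕ in atTop, |S n ω| < 2 * √(c * (n * log n)) := by
  have htail (n : ℕ) (hn : n ≠ 0) :
      μ {ω | 2 * √(c * (n * log n)) ≤ |S n ω|} ≤ ENNReal.ofReal (2 * (1 / (n : ℝ) ^ 2)) := by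
    rw [← ofReal_measureReal]
    refine ENNReal.ofReal_le_ofReal
      ((measureReal_le_abs_le_of_hasSubgaussianMGF (hS n) (by positivity)).trans_eq ?_)
    have hn₀ : (0 : ℝ) < n := by positivity
    rw [mul_pow, sq_sqrt (mul_nonneg c.coe_nonneg (mul_nonneg hn₀.le (log_natCast_nonneg n))),
      one_div, ← exp_log (pow_pos hn₀ 2), ← exp_neg, log_pow]
    congr 2
    push_cast
    field_simp
  have hsummable : Summable fun n : ℕ => 2 * (1 / ((n + 1 : ℕ) : ℝ) ^ 2) :=
    ((summable_nat_add_iff 1).2 (summable_one_div_nat_pow.2 one_lt_two)).mul_left 2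
  have hfinite :
      ∑' n : ℕ, μ {ω | 2 * √(c * ((n + 1 : ℕ) * log (n + 1 : ℕ))) ≤ |S (n + 1) ω|} ≠ ∞ := by
    refine ne_top_of_le_ne_top ?_ (ENNReal.tsum_le_tsum fun n => htail (n + 1) n.succ_ne_zero)
    exact hsummable.tsum_ofReal_ne_top
  filter_upwards [ae_eventually_notMem hfinite] with ω hω
  rw [← map_add_atTop_eq_nat 1, eventually_map]
  filter_upwards [hω] with n hn using not_le.1 hn

lemma ae_forall_tendsto_div_rpow_of_hasSubgaussianMGF [IsFiniteMeasure μ] (hc : c ≠ 0)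
    (hS : ∀ n : ℕ, HasSubgaussianMGF (S n) (n * c) μ) :
    ∀ᵐ ω ∂μ, ∀ α : ℝ, 1 / 2 < α → Tendsto (fun n : ℕ => |S n ω| / (n : ℝ) ^ α) atTop (𝓝 0) := by
  filter_upwards [ae_eventually_abs_lt_of_hasSubgaussianMGF hc hS] with ω hω α hα
  have hlim : Tendsto (fun n : ℕ => 2 * √(c * (log n / (n : ℝ) ^ (2 * α - 1)))) atTop (𝓝 0) := by
    have hlog := (isLittleO_log_rpow_atTop (by linarith : 0 < 2 * α - 1)).tendsto_div_nhds_zero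
    simpa using ((hlog.comp tendsto_natCast_atTop_atTop).const_mul (c : ℝ)).sqrt.const_mul 2
  refine squeeze_zero' (.of_forall fun n => by positivity) ?_ hlim
  filter_upwards [hω, eventually_gt_atTop 0] with n hlt hn
  have hn₀ : (0 : ℝ) < n := by positivity
  have hsq : (n : ℝ) ^ (2 * α - 1) * n = ((n : ℝ) ^ α) ^ 2 := by
    rw [← rpow_add_one hn₀.ne', ← rpow_natCast, ← rpow_mul hn₀.le]
    congr 1
    push_cast
    ring
  rw [div_le_iff₀ (by positivity)]
  refine hlt.le.trans_eq ?_
  rw [mul_assoc, ← sqrt_sq (rpow_nonneg hn₀.le α), ← sqrt_mul' _ (by positivity), ← hsq]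
  congr 2
  field_simp

end Fluctuations

section ProductMeasure

variable {ν : Measure ℝ} {μ : Measure (ℕ → ℝ)}

lemma IsProductMeasure.map_eval [IsProbabilityMeasure ν] (hμ : IsProductMeasure ν μ) (i : ℕ) :
    μ.map (fun h => h i) = ν := by
  have hlast := (measurePreserving_eval (fun _ : Fin (i + 1) => ν) (Fin.last i)).map_eq
  rwa [← hμ (i + 1), Measure.map_map (measurable_pi_apply _) (by fun_prop)] at hlast

lemma IsProductMeasure.ae_forall [IsProbabilityMeasure ν] (hμ : IsProductMeasure ν μ)
    {p : ℝ → Prop} (hp : ∀ᵐ x ∂ν, p x) : ∀ᵐ h ∂μ, ∀ i, p (h i) :=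
  ae_all_iff.2 fun i =>
    ae_of_ae_map (measurable_pi_apply i).aemeasurable (by rwa [hμ.map_eval])

lemma IsProductMeasure.hasSubgaussianMGF_sum [IsProbabilityMeasure ν] [IsProbabilityMeasure μ]
    (hμ : IsProductMeasure ν μ) {c : ℝ≥0} (hν : HasSubgaussianMGF id c ν) (n : ℕ) :
    HasSubgaussianMGF (fun h : ℕ → ℝ => ∑ i : Fin n, h i) (n * c) μ := by
  have hindep : iIndepFun (fun (i : Fin n) (h : ℕ → ℝ) => h i) μ := by
    rw [iIndepFun_iff_map_fun_eq_pi_map fun i => (measurable_pi_apply _).aemeasurable, hμ n]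
    simp only [hμ.map_eval]
  have hcoord (i : ℕ) : HasSubgaussianMGF (fun h : ℕ → ℝ => h i) c μ := by
    rwa [← HasSubgaussianMGF.id_map_iff (measurable_pi_apply i).aemeasurable, hμ.map_eval]
  simpa using HasSubgaussianMGF.sum_of_iIndepFun hindep (s := Finset.univ) fun i _ => hcoord i

end ProductMeasure

section DichotomousField

variable {β c α : ℝ} {h : ℕ → ℝ}

lemma hasSubgaussianMGF_id_dichotomousLaw (hc : 0 < c) :
    HasSubgaussianMGF id (c.toNNReal ^ 2) (dichotomousLaw c) := by
  have hmem : ∀ᵐ h ∂dichotomousLaw c, id h ∈ Set.Icc (-c) c := by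
    filter_upwards [ae_dichotomousLaw (c := c)] with h hh
    rcases hh with rfl | rfl <;> constructor <;> simp only [id_eq] <;> linarith
  convert hasSubgaussianMGF_of_mem_Icc_of_integral_eq_zero aemeasurable_id hmem
    (by simp [integral_dichotomousLaw]) using 1
  rw [sub_neg_eq_add, ← two_mul, nnnorm_mul, ← Real.toNNReal_eq_nnnorm_of_nonneg hc.le]
  simp

lemma mdpRate_dichotomousLaw (hβ : 0 < β) (hc : 1 / 2 ≤ c) :
    mdpRate β (β - β ^ 2 * (1 - tanh (β * c) ^ 2)) 1 = fun x => ENNReal.ofReal (x ^ 2 /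
      (2 * ((1 - tanh (β * c) ^ 2) / (1 - β * (1 - tanh (β * c) ^ 2))))) := by
  have hl : 0 < β * (1 - β * (1 - tanh (β * c) ^ 2)) := by
    linarith [(isMinOfType_G_dichotomousLaw hβ hc).2.1]
  have hl' := pos_of_mul_pos_right hl hβ.le
  have hvariance : (β - β ^ 2 * (1 - tanh (β * c) ^ 2))⁻¹ - β⁻¹ =
      (1 - tanh (β * c) ^ 2) / (1 - β * (1 - tanh (β * c) ^ 2)) := by
    rw [show β - β ^ 2 * (1 - tanh (β * c) ^ 2) = β * (1 - β * (1 - tanh (β * c) ^ 2)) by ring]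
    field_simp
    ring
  funext x
  rw [mdpRate, if_pos rfl, hvariance]

lemma hasLDP_gibbsMeasure_dichotomous (hβ : 0 < β) (hc : 1 / 2 ≤ c)
    (hh : ∀ i, h i = c ∨ h i = -c) (hα₀ : 1 / 2 < α) (hα₁ : α < 1)
    (hsum : Tendsto (fun n : ℕ => |∑ i : Fin n, h i| / (n : ℝ) ^ α) atTop (𝓝 0)) :
    HasLDP (fun n => (gibbsMeasure β h n).map fun σ => mag σ / (n : ℝ) ^ α)
      (fun n => (n : ℝ) ^ (2 * α - 1)) (mdpRate β (β - β ^ 2 * (1 - tanh (β * c) ^ 2)) 1) := by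
  obtain ⟨δ, hδ, hcoercive⟩ := exists_mul_sq_le_G_dichotomousLaw_sub hβ hc
  have hc₀ : 0 < c := one_half_pos.trans_le hc
  have hspeed (n : ℕ) : ((n : ℝ) ^ α) ^ 2 / n = (n : ℝ) ^ (2 * α - 1) := by
    rw [← rpow_mul_natCast n.cast_nonneg, mul_comm α, Nat.cast_two]
    exact (rpow_sub_one' n.cast_nonneg (by linarith)).symm
  have hscale (n : ℕ) : (n : ℝ) / (n : ℝ) ^ α = (n : ℝ) ^ (1 - α) := by
    rw [rpow_sub' n.cast_nonneg (by linarith), rpow_one]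
  have hatTop {γ : ℝ} (hγ : 0 < γ) : Tendsto (fun n : ℕ => (n : ℝ) ^ γ) atTop atTop :=
    (tendsto_rpow_atTop hγ).comp tendsto_natCast_atTop_atTop
  simp only [← hspeed]
  refine hasLDP_gibbsMeasure_of_isMinOfType (isMinOfType_G_dichotomousLaw hβ hc) ?_
    contDiff_G_dichotomousLaw hδ hcoercive (b := fun n => (n : ℝ) ^ α)
    (ε := fun n => β / c * (|∑ i : Fin n, h i| / n)) ?_ ?_ ?_ ?_
  · have := sub_pos.2 (tanh_sq_lt_one (β * c))
    exact sub_lt_self β (by positivity)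
  · simpa only [hspeed] using hatTop (by linarith)
  · simpa only [hscale] using hatTop (by linarith)
  · rw [← mul_zero (β / c)]
    refine (hsum.const_mul (β / c)).congr' ?_
    filter_upwards [eventually_ne_atTop 0] with n hn
    field_simp
  · filter_upwards [eventually_ne_atTop 0] with n hn
    exact abs_Gn_sub_G_dichotomousLaw_le hβ hc₀ hn hh

end DichotomousField

/-- MDP for the Curie-Weiss model with dichotomous external field, large field case
(Example 4.2 (i) of the paper). -/
theorem curie_weiss_dichotomous_field
    (β : ℝ) (hβ : 0 < β) (hf : ℝ) (hhf : 1 / 2 ≤ hf)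
    (ν : Measure ℝ)
    (hν : ν = (1 / 2 : ℝ≥0∞) • Measure.dirac hf + (1 / 2 : ℝ≥0∞) • Measure.dirac (-hf))
    (μ : Measure (ℕ → ℝ)) [IsProbabilityMeasure μ] (hμ : IsProductMeasure ν μ) :
    (∀ x : ℝ, x ≠ 0 → G β ν 0 < G β ν x) ∧
      IsMinOfType β ν 0 1 (β - β ^ 2 * (1 - Real.tanh (β * hf) ^ 2)) ∧
      ∀ᵐ h ∂μ, ∀ α : ℝ, 1 / 2 < α → α < 1 →
        HasLDP
          (fun n => (gibbsMeasure β h n).map (fun σ => mag σ / (n : ℝ) ^ α))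
          (fun n => (n : ℝ) ^ (2 * α - 1))
          (fun x => ENNReal.ofReal (x ^ 2 /
            (2 * ((1 - Real.tanh (β * hf) ^ 2) /
              (1 - β * (1 - Real.tanh (β * hf) ^ 2)))))) := by
  have hhf₀ : 0 < hf := one_half_pos.trans_le hhf
  obtain rfl : ν = dichotomousLaw hf := hν
  refine ⟨fun x hx => G_dichotomousLaw_zero_lt hβ hhf hx, isMinOfType_G_dichotomousLaw hβ hhf, ?_⟩
  filter_upwards [hμ.ae_forall ae_dichotomousLaw, ae_forall_tendsto_div_rpow_of_hasSubgaussianMGF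
    (pow_ne_zero 2 (toNNReal_pos.2 hhf₀).ne')
    (hμ.hasSubgaussianMGF_sum (hasSubgaussianMGF_id_dichotomousLaw hhf₀))]
    with h hvalues hsum α hα₀ hα₁
  rw [← mdpRate_dichotomousLaw hβ hhf]
  exact hasLDP_gibbsMeasure_dichotomous hβ hhf hvalues hα₀ hα₁ (hsum α hα₀)
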